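/- arXiv:2404.08319 — 5 statements merged into one kernel-verified Lean document; each statement's English description precedes it below -/
import Mathlib

section
/- Let h:[a,b]→[0,∞) be a non-negative concave function with positive integral, and let α,β>0 with β≤α. Define g_α(h) = (∫_a^b t·h(t)^α dt)/(∫_a^b h(t)^α dt). Then (∫_{g_α(h)}^b h(t)^β dt)/(∫_a^b h(t)^β dt) ≥ ((β+1)/(α+2))^{β+1}. -/
open Set MeasureTheory intervalIntegral

/-- The chord inequality for concave functions, with denominators cleared. -/
lemma ConcaveOn.chord_le {f : ℝ → ℝ} {S : Set ℝ} (hf : ConcaveOn ℝ S f) {x y z : ℝ}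
    (hx : x ∈ S) (hz : z ∈ S) (hxy : x ≤ y) (hyz : y ≤ z) :
    (z - y) * f x + (y - x) * f z ≤ (z - x) * f y := by
  rcases (hxy.trans hyz).eq_or_lt with h | h
  · obtain rfl : x = y := by linarith
    obtain rfl : x = z := h
    simp
  · have hzx : 0 < z - x := by linarith
    have key := hf.2 hx hz
      (show 0 ≤ (z - y) / (z - x) from div_nonneg (by linarith) hzx.le)
      (show 0 ≤ (y - x) / (z - x) from div_nonneg (by linarith) hzx.le)
      (by field_simp; ring)
    have harg : ((z - y) / (z - x)) • x + ((y - x) / (z - x)) • z = y := by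
      simp only [smul_eq_mul]; field_simp; ring
    rw [harg] at key
    simp only [smul_eq_mul] at key
    have := mul_le_mul_of_nonneg_left key hzx.le
    have e : (z - x) * ((z - y) / (z - x) * f x + (y - x) / (z - x) * f z) =
        (z - y) * f x + (y - x) * f z := by field_simp
    linarith

/-- A function that is continuous and bounded on an open interval is integrable there. -/
lemma intervalIntegrable_of_continuousOn_Ioo {f : ℝ → ℝ} {a b C : ℝ} (hab : a ≤ b)
    (hf : ContinuousOn f (Ioo a b)) (hC : ∀ t ∈ Ioo a b, |f t| ≤ C) :
    IntervalIntegrable f volume a b := by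
  rw [intervalIntegrable_iff_integrableOn_Ioo_of_le hab]
  refine IntegrableOn.of_bound (by simp) (hf.aestronglyMeasurable measurableSet_Ioo) C ?_
  exact (ae_restrict_mem measurableSet_Ioo).mono fun t ht => by simpa using hC t ht

section NonnegConcave

variable {a b : ℝ} {h : ℝ → ℝ}

lemma ConcaveOn.le_two_mul_midpoint (hconc : ConcaveOn ℝ (Icc a b) h)
    (hnn : ∀ t ∈ Icc a b, 0 ≤ h t) {t : ℝ} (ht : t ∈ Icc a b) :
    h t ≤ 2 * h ((a + b) / 2) := by
  have ht' : a + b - t ∈ Icc a b := ⟨by linarith [ht.2], by linarith [ht.1]⟩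
  have key := hconc.2 ht ht' (by norm_num : (0 : ℝ) ≤ 1 / 2)
    (by norm_num : (0 : ℝ) ≤ 1 / 2) (by norm_num)
  have harg : (1 / 2 : ℝ) • t + (1 / 2 : ℝ) • (a + b - t) = (a + b) / 2 := by
    simp only [smul_eq_mul]; ring
  rw [harg] at key
  simp only [smul_eq_mul] at key
  linarith [hnn _ ht']

lemma ConcaveOn.continuousOn_Ioo_of_Icc (hconc : ConcaveOn ℝ (Icc a b) h) :
    ContinuousOn h (Ioo a b) := by
  simpa using hconc.continuousOn_interior

lemma ConcaveOn.pos_on_Ioo (hab : a < b) (hconc : ConcaveOn ℝ (Icc a b) h)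
    (hnn : ∀ t ∈ Icc a b, 0 ≤ h t) (hint : 0 < ∫ t in a..b, h t) {t : ℝ} (ht : t ∈ Ioo a b) :
    0 < h t := by
  obtain ⟨c, hc, hc0⟩ : ∃ c ∈ Icc a b, 0 < h c := by
    by_contra! hcon
    have : ∫ t in a..b, h t = ∫ _ in a..b, (0 : ℝ) :=
      integral_congr fun x hx => by
        rw [uIcc_of_le hab.le] at hx
        exact le_antisymm (hcon x hx) (hnn x hx)
    simp [this] at hint
  rcases le_total t c with htc | htc
  · have := hconc.chord_le (left_mem_Icc.2 hab.le) hc ht.1.le htc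
    have h1 : 0 < (t - a) * h c := mul_pos (by linarith [ht.1]) hc0
    have h2 : 0 ≤ (c - t) * h a := mul_nonneg (by linarith) (hnn _ (left_mem_Icc.2 hab.le))
    exact pos_of_mul_pos_right (by linarith) (by linarith [ht.1] : 0 ≤ c - a)
  · have := hconc.chord_le hc (right_mem_Icc.2 hab.le) htc ht.2.le
    have h1 : 0 < (b - t) * h c := mul_pos (by linarith [ht.2]) hc0
    have h2 : 0 ≤ (t - c) * h b := mul_nonneg (by linarith) (hnn _ (right_mem_Icc.2 hab.le))
    exact pos_of_mul_pos_right (by linarith) (by linarith [ht.2] : 0 ≤ b - c)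

lemma ConcaveOn.continuousOn_rpow (hconc : ConcaveOn ℝ (Icc a b) h) {p : ℝ} (hp : 0 < p) :
    ContinuousOn (fun t => h t ^ p) (Ioo a b) :=
  hconc.continuousOn_Ioo_of_Icc.rpow_const fun _ _ => Or.inr hp.le

lemma ConcaveOn.intervalIntegrable_mul_rpow (hab : a ≤ b) (hconc : ConcaveOn ℝ (Icc a b) h)
    (hnn : ∀ t ∈ Icc a b, 0 ≤ h t) {p : ℝ} (hp : 0 < p) {f : ℝ → ℝ}
    (hf : ContinuousOn f (Icc a b)) :
    IntervalIntegrable (fun t => f t * h t ^ p) volume a b := by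
  obtain ⟨C, hC⟩ := isCompact_Icc.exists_bound_of_continuousOn hf
  refine intervalIntegrable_of_continuousOn_Ioo (C := C * (2 * h ((a + b) / 2)) ^ p) hab
    ((hf.mono Ioo_subset_Icc_self).mul (hconc.continuousOn_rpow hp)) fun t ht => ?_
  have ht' := Ioo_subset_Icc_self ht
  have h1 : |f t| ≤ C := hC t ht'
  have h2 := Real.rpow_le_rpow (hnn t ht') (hconc.le_two_mul_midpoint hnn ht') hp.le
  have h3 := Real.rpow_nonneg (hnn t ht') p
  rw [abs_mul, abs_of_nonneg h3]
  exact mul_le_mul h1 h2 h3 ((abs_nonneg _).trans h1)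

lemma ConcaveOn.intervalIntegrable_rpow (hab : a ≤ b) (hconc : ConcaveOn ℝ (Icc a b) h)
    (hnn : ∀ t ∈ Icc a b, 0 ≤ h t) {p : ℝ} (hp : 0 < p) :
    IntervalIntegrable (fun t => h t ^ p) volume a b := by
  simpa using hconc.intervalIntegrable_mul_rpow hab hnn hp (continuousOn_const (c := (1 : ℝ)))

lemma integral_affine_rpow {β y m x u v : ℝ} (hβ : 0 < β) :
    (β + 1) * m * ∫ t in u..v, (y + m * (t - x)) ^ β =
      (y + m * (v - x)) ^ (β + 1) - (y + m * (u - x)) ^ (β + 1) := by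
  rw [← intervalIntegral.integral_const_mul]
  refine integral_eq_sub_of_hasDerivAt (f := fun t => (y + m * (t - x)) ^ (β + 1)) ?_ ?_
  · intro t _
    have h1 : HasDerivAt (fun t => y + m * (t - x)) m t := by
      simpa using (((hasDerivAt_id t).sub_const x).const_mul m).const_add y
    refine (h1.rpow_const (p := β + 1) (Or.inr (by linarith))).congr_deriv ?_
    rw [add_sub_cancel_right]; ring
  · refine Continuous.intervalIntegrable ?_ _ _
    refine continuous_const.mul (Continuous.rpow_const (by fun_prop) fun _ => Or.inr hβ.le)

/-- The quantity `h ^ (β + 1) / ∫ t in x..b, h t ^ β` is nondecreasing in `x`. -/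
lemma ConcaveOn.rpow_mul_tail_le (hconc : ConcaveOn ℝ (Icc a b) h)
    (hnn : ∀ t ∈ Icc a b, 0 ≤ h t) {β : ℝ} (hβ : 0 < β) {s t : ℝ}
    (hs : s ∈ Icc a b) (ht : t ∈ Icc a b) (hst : s < t) :
    h s ^ (β + 1) * ∫ x in t..b, h x ^ β ≤ h t ^ (β + 1) * ∫ x in s..b, h x ^ β := by
  have hab : a ≤ b := hs.1.trans hs.2
  have hI := hconc.intervalIntegrable_rpow hab hnn hβ
  have hb : b ∈ Icc a b := right_mem_Icc.2 hab
  have hI1 : IntervalIntegrable (fun x => h x ^ β) volume s t :=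
    hI.mono_set (uIcc_subset_uIcc (by rwa [uIcc_of_le hab]) (by rwa [uIcc_of_le hab]))
  have hI2 : IntervalIntegrable (fun x => h x ^ β) volume t b :=
    hI.mono_set (uIcc_subset_uIcc (by rwa [uIcc_of_le hab]) (by rwa [uIcc_of_le hab]))
  have hsum : ∫ x in s..b, h x ^ β = (∫ x in s..t, h x ^ β) + ∫ x in t..b, h x ^ β :=
    (integral_add_adjacent_intervals hI1 hI2).symm
  have hT : 0 ≤ ∫ x in t..b, h x ^ β := integral_nonneg ht.2 fun x hx =>
    Real.rpow_nonneg (hnn x ⟨ht.1.trans hx.1, hx.2⟩) _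
  have hS : 0 ≤ ∫ x in s..t, h x ^ β := integral_nonneg hst.le fun x hx =>
    Real.rpow_nonneg (hnn x ⟨hs.1.trans hx.1, hx.2.trans ht.2⟩) _
  have hp : 0 ≤ h t ^ (β + 1) := Real.rpow_nonneg (hnn t ht) _
  rcases le_or_gt (h s) (h t) with hle | hlt
  · have := Real.rpow_le_rpow (hnn s hs) hle (by linarith : 0 ≤ β + 1)
    rw [hsum]
    nlinarith [mul_le_mul_of_nonneg_right this hT, mul_nonneg hp hS]
  · set m : ℝ := (h t - h s) / (t - s) with hm
    have hts : 0 < t - s := by linarith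
    have hm0 : m < 0 := div_neg_of_neg_of_pos (by linarith) hts
    have hmts : m * (t - s) = h t - h s := by rw [hm]; field_simp
    have hcont : Continuous fun x => (h t + m * (x - t)) ^ β :=
      Continuous.rpow_const (by fun_prop) fun _ => Or.inr hβ.le
    have hleft : ∫ x in s..t, (h t + m * (x - t)) ^ β ≤ ∫ x in s..t, h x ^ β := by
      refine integral_mono_on hst.le (hcont.intervalIntegrable _ _) hI1 fun x hx => ?_
      have hch := hconc.chord_le hs ht hx.1 hx.2
      refine Real.rpow_le_rpow ?_ ?_ hβ.le
      · nlinarith [hnn t ht, hx.2]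
      · refine le_of_mul_le_mul_left (a := t - s) ?_ hts
        calc (t - s) * (h t + m * (x - t)) = (t - s) * h t + (m * (t - s)) * (x - t) := by ring
          _ = (t - x) * h s + (x - s) * h t := by rw [hmts]; ring
          _ ≤ _ := hch
    have hline : ∀ x ∈ Icc t b, h x ≤ h t + m * (x - t) := fun x hx => by
      have hch := hconc.chord_le hs ⟨ht.1.trans hx.1, hx.2⟩ hst.le hx.1
      refine le_of_mul_le_mul_left (a := t - s) ?_ hts
      calc (t - s) * h x ≤ (t - s) * h t + (h t - h s) * (x - t) := by linarith
        _ = (t - s) * (h t + m * (x - t)) := by rw [← hmts]; ring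
    have hright : ∫ x in t..b, h x ^ β ≤ ∫ x in t..b, (h t + m * (x - t)) ^ β :=
      integral_mono_on ht.2 hI2 (hcont.intervalIntegrable _ _) fun x hx =>
        Real.rpow_le_rpow (hnn x ⟨ht.1.trans hx.1, hx.2⟩) (hline x hx) hβ.le
    have e1 := integral_affine_rpow (y := h t) (m := m) (x := t) (u := s) (v := t) hβ
    have e2 := integral_affine_rpow (y := h t) (m := m) (x := t) (u := t) (v := b) hβ
    have hs' : h t + m * (s - t) = h s := by linarith
    rw [hs'] at e1
    simp only [sub_self, mul_zero, add_zero] at e1 e2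
    have hLb : 0 ≤ (h t + m * (b - t)) ^ (β + 1) :=
      Real.rpow_nonneg ((hnn b hb).trans (hline b ⟨ht.2, le_rfl⟩)) _
    have hk : 0 < -((β + 1) * m) := by nlinarith
    have h1 : -((β + 1) * m) * ∫ x in t..b, h x ^ β ≤ h t ^ (β + 1) := by
      have := mul_le_mul_of_nonneg_left hright hk.le
      linarith
    have h2 : h s ^ (β + 1) - h t ^ (β + 1) ≤ -((β + 1) * m) * ∫ x in s..t, h x ^ β := by
      have := mul_le_mul_of_nonneg_left hleft hk.le
      linarith
    have h3 : (h s ^ (β + 1) - h t ^ (β + 1)) * (∫ x in t..b, h x ^ β) ≤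
        h t ^ (β + 1) * ∫ x in s..t, h x ^ β := by
      calc _ ≤ (-((β + 1) * m) * ∫ x in s..t, h x ^ β) * (∫ x in t..b, h x ^ β) :=
            mul_le_mul_of_nonneg_right h2 hT
        _ = (-((β + 1) * m) * ∫ x in t..b, h x ^ β) * (∫ x in s..t, h x ^ β) := by ring
        _ ≤ _ := mul_le_mul_of_nonneg_right h1 hS
    rw [hsum]
    linarith

end NonnegConcave

/-- The fraction of the `β`-mass of `h` on `[a, b]` lying to the right of `x`, raised to the
power `1 / (β + 1)`. -/
noncomputable def tailRoot (h : ℝ → ℝ) (a b β x : ℝ) : ℝ :=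
  ((∫ t in x..b, h t ^ β) / ∫ t in a..b, h t ^ β) ^ (1 / (β + 1))

section TailRoot

variable {a b β : ℝ} {h : ℝ → ℝ}

lemma ConcaveOn.integral_rpow_pos (hab : a < b) (hconc : ConcaveOn ℝ (Icc a b) h)
    (hnn : ∀ t ∈ Icc a b, 0 ≤ h t) (hpos : ∀ t ∈ Ioo a b, 0 < h t) {p : ℝ} (hp : 0 < p)
    {x : ℝ} (hx : x ∈ Ico a b) : 0 < ∫ t in x..b, h t ^ p := by
  refine intervalIntegral_pos_of_pos_on ?_
    (fun t ht => Real.rpow_pos_of_pos (hpos t ⟨hx.1.trans_lt ht.1, ht.2⟩) _) hx.2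
  refine (hconc.intervalIntegrable_rpow hab.le hnn hp).mono_set (uIcc_subset_uIcc ?_ ?_)
  · rw [uIcc_of_le hab.le]; exact Ico_subset_Icc_self hx
  · exact right_mem_uIcc

lemma tailRoot_left (hA : 0 < ∫ t in a..b, h t ^ β) : tailRoot h a b β a = 1 := by
  simp [tailRoot, div_self hA.ne']

lemma tailRoot_right (hβ : 0 < β) : tailRoot h a b β b = 0 := by
  rw [tailRoot, integral_same, zero_div, Real.zero_rpow (by positivity)]

lemma tail_nonneg (hnn : ∀ t ∈ Icc a b, 0 ≤ h t) {x : ℝ} (hx : x ∈ Icc a b) :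
    0 ≤ ∫ t in x..b, h t ^ β :=
  integral_nonneg hx.2 fun t ht => Real.rpow_nonneg (hnn t ⟨hx.1.trans ht.1, ht.2⟩) _

lemma tailRoot_nonneg (hnn : ∀ t ∈ Icc a b, 0 ≤ h t) {x : ℝ} (hx : x ∈ Icc a b) :
    0 ≤ tailRoot h a b β x :=
  Real.rpow_nonneg (div_nonneg (tail_nonneg hnn hx)
    (tail_nonneg hnn (left_mem_Icc.2 (hx.1.trans hx.2)))) _

lemma tailRoot_rpow (hnn : ∀ t ∈ Icc a b, 0 ≤ h t) (hβ : 0 < β) {x : ℝ} (hx : x ∈ Icc a b) :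
    tailRoot h a b β x ^ (β + 1) = (∫ t in x..b, h t ^ β) / ∫ t in a..b, h t ^ β := by
  rw [tailRoot, ← Real.rpow_mul (div_nonneg (tail_nonneg hnn hx)
    (tail_nonneg hnn (left_mem_Icc.2 (hx.1.trans hx.2)))), one_div_mul_cancel (by positivity),
    Real.rpow_one]

lemma ConcaveOn.continuousOn_tailRoot (hab : a < b) (hconc : ConcaveOn ℝ (Icc a b) h)
    (hnn : ∀ t ∈ Icc a b, 0 ≤ h t) (hβ : 0 < β) :
    ContinuousOn (tailRoot h a b β) (Icc a b) := by
  have hI := hconc.intervalIntegrable_rpow hab.le hnn hβ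
  have hc : ContinuousOn (fun x => ∫ t in x..b, h t ^ β) (Icc a b) := by
    rw [← uIcc_of_le hab.le]
    refine continuousOn_primitive_interval_left ?_
    rw [uIcc_of_le hab.le]
    exact (intervalIntegrable_iff_integrableOn_Icc_of_le hab.le).1 hI
  exact (hc.div_const _).rpow_const fun _ _ => Or.inr (by positivity)

lemma ConcaveOn.hasDerivAt_tail (hab : a < b) (hconc : ConcaveOn ℝ (Icc a b) h)
    (hnn : ∀ t ∈ Icc a b, 0 ≤ h t) (hβ : 0 < β) {x : ℝ} (hx : x ∈ Ioo a b) :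
    HasDerivAt (fun x => ∫ t in x..b, h t ^ β) (-h x ^ β) x := by
  have hI := hconc.intervalIntegrable_rpow hab.le hnn hβ
  have hc := hconc.continuousOn_rpow hβ
  refine integral_hasDerivAt_left ?_ (hc.stronglyMeasurableAtFilter isOpen_Ioo x hx)
    (hc.continuousAt (isOpen_Ioo.mem_nhds hx))
  refine hI.mono_set (uIcc_subset_uIcc ?_ right_mem_uIcc)
  rw [uIcc_of_le hab.le]; exact Ioo_subset_Icc_self hx

lemma ConcaveOn.hasDerivAt_tailRoot (hab : a < b) (hconc : ConcaveOn ℝ (Icc a b) h)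
    (hnn : ∀ t ∈ Icc a b, 0 ≤ h t) (hpos : ∀ t ∈ Ioo a b, 0 < h t) (hβ : 0 < β)
    {x : ℝ} (hx : x ∈ Ioo a b) :
    HasDerivAt (tailRoot h a b β)
      (-(h x ^ β / (tailRoot h a b β x ^ β * ((β + 1) * ∫ t in a..b, h t ^ β)))) x := by
  have hA := hconc.integral_rpow_pos hab hnn hpos hβ (left_mem_Ico.2 hab)
  have hF := hconc.integral_rpow_pos hab hnn hpos hβ (Ioo_subset_Ico_self hx)
  have hG := div_pos hF hA
  refine (((hconc.hasDerivAt_tail hab hnn hβ hx).div_const _).rpow_const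
    (p := 1 / (β + 1)) (Or.inl hG.ne')).congr_deriv ?_
  have e : (1 / (β + 1) - 1 : ℝ) = -(1 / (β + 1) * β) := by field_simp; ring
  rw [e, Real.rpow_neg hG.le, Real.rpow_mul hG.le, ← tailRoot]
  field_simp

lemma ConcaveOn.tailRoot_pos (hab : a < b) (hconc : ConcaveOn ℝ (Icc a b) h)
    (hnn : ∀ t ∈ Icc a b, 0 ≤ h t) (hpos : ∀ t ∈ Ioo a b, 0 < h t) (hβ : 0 < β)
    {x : ℝ} (hx : x ∈ Ico a b) : 0 < tailRoot h a b β x :=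
  Real.rpow_pos_of_pos (div_pos (hconc.integral_rpow_pos hab hnn hpos hβ hx)
    (hconc.integral_rpow_pos hab hnn hpos hβ (left_mem_Ico.2 hab))) _

lemma ConcaveOn.tailRoot_antitoneOn (hab : a < b) (hconc : ConcaveOn ℝ (Icc a b) h)
    (hnn : ∀ t ∈ Icc a b, 0 ≤ h t) (hpos : ∀ t ∈ Ioo a b, 0 < h t) (hβ : 0 < β) :
    AntitoneOn (tailRoot h a b β) (Icc a b) := by
  have hA := hconc.integral_rpow_pos hab hnn hpos hβ (left_mem_Ico.2 hab)
  refine antitoneOn_of_deriv_nonpos (convex_Icc a b) (hconc.continuousOn_tailRoot hab hnn hβ)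
    ?_ ?_
  all_goals rw [interior_Icc]; intro x hx
  · exact (hconc.hasDerivAt_tailRoot hab hnn hpos hβ hx).differentiableAt.differentiableWithinAt
  · rw [(hconc.hasDerivAt_tailRoot hab hnn hpos hβ hx).deriv, neg_nonpos]
    have := hpos x hx
    have := hconc.tailRoot_pos hab hnn hpos hβ (Ioo_subset_Ico_self hx)
    positivity

/-- One-dimensional Borell–Brascamp–Lieb inequality for tails of `h ^ β`. -/
lemma ConcaveOn.concaveOn_tailRoot (hab : a < b) (hconc : ConcaveOn ℝ (Icc a b) h)
    (hnn : ∀ t ∈ Icc a b, 0 ≤ h t) (hpos : ∀ t ∈ Ioo a b, 0 < h t) (hβ : 0 < β) :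
    ConcaveOn ℝ (Icc a b) (tailRoot h a b β) := by
  have hA := hconc.integral_rpow_pos hab hnn hpos hβ (left_mem_Ico.2 hab)
  refine AntitoneOn.concaveOn_of_deriv (convex_Icc a b)
    (hconc.continuousOn_tailRoot hab hnn hβ) ?_ ?_
  · rw [interior_Icc]; intro x hx
    exact (hconc.hasDerivAt_tailRoot hab hnn hpos hβ hx).differentiableAt.differentiableWithinAt
  · rw [interior_Icc]; intro s hs t ht hst
    rcases hst.eq_or_lt with rfl | hst
    · exact le_rfl
    have hs' := Ioo_subset_Icc_self hs
    have ht' := Ioo_subset_Icc_self ht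
    have hφs := hconc.tailRoot_pos hab hnn hpos hβ (Ioo_subset_Ico_self hs)
    have hφt := hconc.tailRoot_pos hab hnn hpos hβ (Ioo_subset_Ico_self ht)
    have key := hconc.rpow_mul_tail_le hnn hβ hs' ht' hst
    have hle : (h s * tailRoot h a b β t) ^ (β + 1) ≤ (h t * tailRoot h a b β s) ^ (β + 1) := by
      rw [Real.mul_rpow (hnn s hs') hφt.le, Real.mul_rpow (hnn t ht') hφs.le,
        tailRoot_rpow hnn hβ hs', tailRoot_rpow hnn hβ ht', ← mul_div_assoc, ← mul_div_assoc]
      exact div_le_div_of_nonneg_right key hA.le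
    have hle' : h s * tailRoot h a b β t ≤ h t * tailRoot h a b β s :=
      (Real.rpow_le_rpow_iff (mul_nonneg (hnn s hs') hφt.le) (mul_nonneg (hnn t ht') hφs.le)
        (by linarith)).1 hle
    have hle'' := Real.rpow_le_rpow (mul_nonneg (hnn s hs') hφt.le) hle' hβ.le
    rw [Real.mul_rpow (hnn s hs') hφt.le, Real.mul_rpow (hnn t ht') hφs.le] at hle''
    rw [(hconc.hasDerivAt_tailRoot hab hnn hpos hβ hs).deriv,
      (hconc.hasDerivAt_tailRoot hab hnn hpos hβ ht).deriv, neg_le_neg_iff,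
      div_le_div_iff₀ (by positivity) (by positivity)]
    have hk : 0 ≤ (β + 1) * ∫ t in a..b, h t ^ β := mul_nonneg (by linarith) hA.le
    linarith [mul_le_mul_of_nonneg_right hle'' hk]

/-- The weighted mean of `tailRoot` against `(1 - tailRoot) ^ γ * h ^ β` is
`(β + 1) / (γ + β + 2)`. -/
lemma ConcaveOn.integral_tailRoot_sub (hab : a < b) (hconc : ConcaveOn ℝ (Icc a b) h)
    (hnn : ∀ t ∈ Icc a b, 0 ≤ h t) (hpos : ∀ t ∈ Ioo a b, 0 < h t) (hβ : 0 < β)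
    {γ : ℝ} (hγ : 0 ≤ γ) :
    ∫ t in a..b, (tailRoot h a b β t - (β + 1) / (γ + β + 2)) *
      (1 - tailRoot h a b β t) ^ γ * h t ^ β = 0 := by
  set φ := tailRoot h a b β with hφdef
  set A := ∫ t in a..b, h t ^ β with hAdef
  have hA : 0 < A := hconc.integral_rpow_pos hab hnn hpos hβ (left_mem_Ico.2 hab)
  have hφc : ContinuousOn φ (Icc a b) := hconc.continuousOn_tailRoot hab hnn hβ
  have hγc : ContinuousOn (fun t => (1 - φ t) ^ γ) (Icc a b) :=
    (continuousOn_const.sub hφc).rpow_const fun _ _ => Or.inr hγ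
  have hd : ∀ x ∈ Ioo a b, HasDerivAt (fun x => φ x ^ (β + 1) * (1 - φ x) ^ (γ + 1))
      ((γ + β + 2) / ((β + 1) * A) *
        ((φ x - (β + 1) / (γ + β + 2)) * (1 - φ x) ^ γ * h x ^ β)) x := by
    intro x hx
    have h1 := hconc.hasDerivAt_tailRoot hab hnn hpos hβ hx
    have hφx : 0 < φ x := hconc.tailRoot_pos hab hnn hpos hβ (Ioo_subset_Ico_self hx)
    have hφx1 : φ x ≤ 1 := by
      rw [← tailRoot_left (h := h) hA]
      exact hconc.tailRoot_antitoneOn hab hnn hpos hβ (left_mem_Icc.2 hab.le)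
        (Ioo_subset_Icc_self hx) hx.1.le
    have h2 := (h1.rpow_const (p := β + 1) (Or.inr (by linarith))).mul
      ((h1.const_sub 1).rpow_const (p := γ + 1) (Or.inr (by linarith)))
    refine h2.congr_deriv ?_
    have e1 : φ x ^ (β + 1) = φ x ^ β * φ x := by
      rw [Real.rpow_add_one hφx.ne']
    have e2 : (1 - φ x) ^ (γ + 1) = (1 - φ x) ^ γ * (1 - φ x) := by
      rw [Real.rpow_add_one' (by linarith) (by linarith)]
    have hpβ : 0 < φ x ^ β := Real.rpow_pos_of_pos hφx _
    simp only [← hφdef, ← hAdef, add_sub_cancel_right, e1, e2]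
    have : γ + β + 2 ≠ 0 := by positivity
    field_simp
    ring
  have hi : IntervalIntegrable (fun t => (φ t - (β + 1) / (γ + β + 2)) * (1 - φ t) ^ γ * h t ^ β)
      volume a b :=
    hconc.intervalIntegrable_mul_rpow hab.le hnn hβ ((hφc.sub continuousOn_const).mul hγc)
  have hWc : ContinuousOn (fun x => φ x ^ (β + 1) * (1 - φ x) ^ (γ + 1)) (Icc a b) :=
    (hφc.rpow_const fun _ _ => Or.inr (by linarith)).mul
      ((continuousOn_const.sub hφc).rpow_const fun _ _ => Or.inr (by linarith))
  have key := integral_eq_sub_of_hasDerivAt_of_le hab.le hWc hd (hi.const_mul _)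
  rw [intervalIntegral.integral_const_mul] at key
  have ha : φ a = 1 := tailRoot_left hA
  have hb : φ b = 0 := tailRoot_right hβ
  rw [ha, hb, Real.zero_rpow (by linarith), sub_self, Real.zero_rpow (by linarith)] at key
  have hk : (γ + β + 2) / ((β + 1) * A) ≠ 0 := by positivity
  simpa [hk] using key

/-- The function `h / (1 - tailRoot)` is nonincreasing. -/
lemma ConcaveOn.mul_one_sub_tailRoot_le (hab : a < b) (hconc : ConcaveOn ℝ (Icc a b) h)
    (hnn : ∀ t ∈ Icc a b, 0 ≤ h t) (hpos : ∀ t ∈ Ioo a b, 0 < h t) (hβ : 0 < β)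
    {s t : ℝ} (hs : s ∈ Ioo a b) (ht : t ∈ Ioo a b) (hst : s ≤ t) :
    h t * (1 - tailRoot h a b β s) ≤ h s * (1 - tailRoot h a b β t) := by
  have hA := hconc.integral_rpow_pos hab hnn hpos hβ (left_mem_Ico.2 hab)
  have ha := left_mem_Icc.2 hab.le
  have hta : 0 < t - a := by linarith [ht.1]
  have h1 := hconc.chord_le ha (Ioo_subset_Icc_self ht) hs.1.le hst
  have h2 := (hconc.concaveOn_tailRoot hab hnn hpos hβ).chord_le ha
    (Ioo_subset_Icc_self ht) hs.1.le hst
  rw [tailRoot_left hA] at h2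
  have h3 : (t - a) * (1 - tailRoot h a b β s) ≤ (s - a) * (1 - tailRoot h a b β t) := by
    linarith
  have h4 : (s - a) * h t ≤ (t - a) * h s := by
    linarith [mul_nonneg (sub_nonneg.2 hst) (hnn a ha)]
  have h5 : 0 ≤ 1 - tailRoot h a b β t := by
    have := hconc.tailRoot_antitoneOn hab hnn hpos hβ ha (Ioo_subset_Icc_self ht) ht.1.le
    rw [tailRoot_left hA] at this
    linarith
  refine le_of_mul_le_mul_left ?_ hta
  calc (t - a) * (h t * (1 - tailRoot h a b β s))
      = h t * ((t - a) * (1 - tailRoot h a b β s)) := by ring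
    _ ≤ h t * ((s - a) * (1 - tailRoot h a b β t)) :=
        mul_le_mul_of_nonneg_left h3 (hpos t ht).le
    _ = ((s - a) * h t) * (1 - tailRoot h a b β t) := by ring
    _ ≤ ((t - a) * h s) * (1 - tailRoot h a b β t) := mul_le_mul_of_nonneg_right h4 h5
    _ = _ := by ring

/-- The `h ^ α`-weighted mean of `tailRoot` is at least `(β + 1) / (α + 2)`. -/
lemma ConcaveOn.integral_tailRoot_mul_rpow_ge (hab : a < b) (hconc : ConcaveOn ℝ (Icc a b) h)
    (hnn : ∀ t ∈ Icc a b, 0 ≤ h t) (hpos : ∀ t ∈ Ioo a b, 0 < h t) (hβ : 0 < β)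
    {α : ℝ} (hβα : β ≤ α) :
    0 ≤ ∫ t in a..b, (tailRoot h a b β t - (β + 1) / (α + 2)) * h t ^ α := by
  have hA := hconc.integral_rpow_pos hab hnn hpos hβ (left_mem_Ico.2 hab)
  have hα : 0 < α := hβ.trans_le hβα
  have hγ : 0 ≤ α - β := by linarith
  set c := (β + 1) / (α + 2) with hc
  have hc0 : 0 < c := by positivity
  have hc1 : c < 1 := (div_lt_one (by linarith)).2 (by linarith)
  have hφc := hconc.continuousOn_tailRoot hab hnn hβ
  have hanti := hconc.tailRoot_antitoneOn hab hnn hpos hβ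
  obtain ⟨r, hr, hrc⟩ : ∃ r ∈ Ioo a b, tailRoot h a b β r = c :=
    intermediate_value_Ioo' hab.le hφc
      ⟨by rwa [tailRoot_right hβ], by rwa [tailRoot_left hA]⟩
  have hzero := hconc.integral_tailRoot_sub hab hnn hpos hβ hγ
  have e : α - β + β + 2 = α + 2 := by ring
  rw [e, ← hc] at hzero
  have hγc : ContinuousOn (fun t => (1 - tailRoot h a b β t) ^ (α - β)) (Icc a b) :=
    (continuousOn_const.sub hφc).rpow_const fun _ _ => Or.inr hγ
  have hmono : ∫ t in a..b, h r ^ (α - β) * ((tailRoot h a b β t - c) *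
      (1 - tailRoot h a b β t) ^ (α - β) * h t ^ β) ≤
      ∫ t in a..b, (1 - c) ^ (α - β) * ((tailRoot h a b β t - c) * h t ^ α) := by
    refine integral_mono_on_of_le_Ioo hab.le
      ((hconc.intervalIntegrable_mul_rpow hab.le hnn hβ
        ((hφc.sub continuousOn_const).mul hγc)).const_mul _)
      ((hconc.intervalIntegrable_mul_rpow hab.le hnn hα
        (hφc.sub continuousOn_const)).const_mul _) fun t ht => ?_
    have hφ1 : 0 ≤ 1 - tailRoot h a b β t := by
      have := hanti (left_mem_Icc.2 hab.le) (Ioo_subset_Icc_self ht) ht.1.le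
      rw [tailRoot_left hA] at this
      linarith
    have hsplit : h t ^ α = h t ^ (α - β) * h t ^ β := by
      rw [← Real.rpow_add (hpos t ht), sub_add_cancel]
    have hβ0 : 0 ≤ h t ^ β := Real.rpow_nonneg (hpos t ht).le _
    suffices H : (tailRoot h a b β t - c) * (h r * (1 - tailRoot h a b β t)) ^ (α - β) ≤
        (tailRoot h a b β t - c) * (h t * (1 - c)) ^ (α - β) by
      rw [Real.mul_rpow (hpos r hr).le hφ1, Real.mul_rpow (hpos t ht).le (by linarith)] at H
      rw [hsplit]
      calc _ = (tailRoot h a b β t - c) *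
              (h r ^ (α - β) * (1 - tailRoot h a b β t) ^ (α - β)) * h t ^ β := by ring
        _ ≤ _ := mul_le_mul_of_nonneg_right H hβ0
        _ = _ := by ring
    rcases le_total t r with htr | htr
    · have h1 := hconc.mul_one_sub_tailRoot_le hab hnn hpos hβ ht hr htr
      have h2 := hanti (Ioo_subset_Icc_self ht) (Ioo_subset_Icc_self hr) htr
      rw [hrc] at h1 h2
      exact mul_le_mul_of_nonneg_left
        (Real.rpow_le_rpow (mul_nonneg (hpos r hr).le hφ1) h1 hγ) (by linarith)
    · have h1 := hconc.mul_one_sub_tailRoot_le hab hnn hpos hβ hr ht htr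
      have h2 := hanti (Ioo_subset_Icc_self hr) (Ioo_subset_Icc_self ht) htr
      rw [hrc] at h1 h2
      exact mul_le_mul_of_nonpos_left
        (Real.rpow_le_rpow (mul_nonneg (hpos t ht).le (by linarith)) h1 hγ) (by linarith)
  rw [intervalIntegral.integral_const_mul, intervalIntegral.integral_const_mul, hzero,
    mul_zero] at hmono
  exact nonneg_of_mul_nonneg_right hmono (Real.rpow_pos_of_pos (by linarith) _)

end TailRoot

/-- The centroid of `h ^ α` is interior. -/
lemma ConcaveOn.centroid_mem_Ioo {a b α : ℝ} {h : ℝ → ℝ} (hab : a < b)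
    (hconc : ConcaveOn ℝ (Icc a b) h) (hnn : ∀ t ∈ Icc a b, 0 ≤ h t)
    (hpos : ∀ t ∈ Ioo a b, 0 < h t) (hα : 0 < α) :
    (∫ t in a..b, t * h t ^ α) / (∫ t in a..b, h t ^ α) ∈ Ioo a b := by
  have hM := hconc.integral_rpow_pos hab hnn hpos hα (left_mem_Ico.2 hab)
  have hI := hconc.intervalIntegrable_rpow hab.le hnn hα
  have hI1 : IntervalIntegrable (fun t => t * h t ^ α) volume a b :=
    hconc.intervalIntegrable_mul_rpow hab.le hnn hα continuousOn_id
  have h1 : 0 < ∫ t in a..b, (t * h t ^ α - a * h t ^ α) :=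
    intervalIntegral_pos_of_pos_on (hI1.sub (hI.const_mul a)) (fun t ht => by
      rw [← sub_mul]
      exact mul_pos (by linarith [ht.1]) (Real.rpow_pos_of_pos (hpos t ht) _)) hab
  have h2 : 0 < ∫ t in a..b, (b * h t ^ α - t * h t ^ α) :=
    intervalIntegral_pos_of_pos_on ((hI.const_mul b).sub hI1) (fun t ht => by
      rw [← sub_mul]
      exact mul_pos (by linarith [ht.2]) (Real.rpow_pos_of_pos (hpos t ht) _)) hab
  rw [intervalIntegral.integral_sub hI1 (hI.const_mul a),
    intervalIntegral.integral_const_mul] at h1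
  rw [intervalIntegral.integral_sub (hI.const_mul b) hI1,
    intervalIntegral.integral_const_mul] at h2
  exact ⟨(lt_div_iff₀ hM).2 (by linarith), (div_lt_iff₀ hM).2 (by linarith)⟩

/-- A concave function lies below its tangent lines. -/
lemma ConcaveOn.le_tangent {f : ℝ → ℝ} {S : Set ℝ} (hf : ConcaveOn ℝ S f) {x y m : ℝ}
    (hx : x ∈ S) (hy : y ∈ S) (hd : HasDerivAt f m x) : f y ≤ f x + m * (y - x) := by
  rcases lt_trichotomy x y with hxy | rfl | hxy
  · have := hf.slope_le_of_hasDerivAt hx hy hxy hd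
    rw [slope_def_field, div_le_iff₀ (by linarith)] at this
    linarith
  · simp
  · have := hf.le_slope_of_hasDerivAt hy hx hxy hd
    rw [slope_def_field, le_div_iff₀ (by linarith)] at this
    linarith

theorem stmt_0 (a b α β : ℝ) (h : ℝ → ℝ) (hab : a < b)
    (hconc : ConcaveOn ℝ (Set.Icc a b) h)
    (hnn : ∀ t ∈ Set.Icc a b, 0 ≤ h t)
    (hint : 0 < ∫ t in a..b, h t)
    (hα : 0 < α) (hβ : 0 < β) (hβα : β ≤ α) :
    (∫ t in ((∫ t in a..b, t * h t ^ α) / ∫ t in a..b, h t ^ α)..b, h t ^ β) /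
      (∫ t in a..b, h t ^ β) ≥ ((β + 1) / (α + 2)) ^ (β + 1) := by
  have hpos : ∀ t ∈ Ioo a b, 0 < h t := fun t ht => hconc.pos_on_Ioo hab hnn hint ht
  have hg := hconc.centroid_mem_Ioo hab hnn hpos hα
  have hM := hconc.integral_rpow_pos hab hnn hpos hα (left_mem_Ico.2 hab)
  set g := (∫ t in a..b, t * h t ^ α) / ∫ t in a..b, h t ^ α with hgdef
  have hg' := Ioo_subset_Icc_self hg
  rw [ge_iff_le, ← tailRoot_rpow hnn hβ hg']
  refine Real.rpow_le_rpow (by positivity) ?_ (by linarith)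
  obtain ⟨m, hm⟩ : ∃ m, HasDerivAt (tailRoot h a b β) m g :=
    ⟨_, hconc.hasDerivAt_tailRoot hab hnn hpos hβ hg⟩
  have hI := hconc.intervalIntegrable_rpow hab.le hnn hα
  have hI1 : IntervalIntegrable (fun t => t * h t ^ α) volume a b :=
    hconc.intervalIntegrable_mul_rpow hab.le hnn hα continuousOn_id
  have hle : ∫ t in a..b, (tailRoot h a b β t - (β + 1) / (α + 2)) * h t ^ α ≤
      ∫ t in a..b, ((tailRoot h a b β g - (β + 1) / (α + 2) - m * g) * h t ^ α +
        m * (t * h t ^ α)) := by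
    refine integral_mono_on hab.le
      (hconc.intervalIntegrable_mul_rpow hab.le hnn hα
        ((hconc.continuousOn_tailRoot hab hnn hβ).sub continuousOn_const))
      ((hI.const_mul _).add (hI1.const_mul _)) fun t ht => ?_
    have h1 := (hconc.concaveOn_tailRoot hab hnn hpos hβ).le_tangent hg' ht hm
    have h2 := Real.rpow_nonneg (hnn t ht) α
    calc _ ≤ (tailRoot h a b β g + m * (t - g) - (β + 1) / (α + 2)) * h t ^ α :=
          mul_le_mul_of_nonneg_right (by linarith) h2
      _ = _ := by ring
  rw [intervalIntegral.integral_add (hI.const_mul _) (hI1.const_mul _),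
    intervalIntegral.integral_const_mul, intervalIntegral.integral_const_mul] at hle
  have hgM : ∫ t in a..b, t * h t ^ α = g * ∫ t in a..b, h t ^ α :=
    (div_mul_cancel₀ _ hM.ne').symm
  rw [hgM] at hle
  have hfin : 0 ≤ (tailRoot h a b β g - (β + 1) / (α + 2)) * ∫ t in a..b, h t ^ α := by
    linarith [hconc.integral_tailRoot_mul_rpow_ge hab hnn hpos hβ hβα]
  linarith [nonneg_of_mul_nonneg_left hfin hM]
end

section
/- Let f:[a,b]→[0,∞) with a<0<b be a p-concave function for some p>0 (i.e. f^p is concave on its support), with positive integral, and suppose its 1-centroid (∫_a^b t f(t) dt)/(∫_a^b f(t) dt) equals 0. Then (∫_a^0 f(t) dt)/(∫_a^b f(t) dt) ≥ ((p+1)/(2p+1))^{(p+1)/p}. -/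
open MeasureTheory Set

/-- If `F - G` has zero mass on `s` and changes sign from nonpositive to nonnegative at `c`, then
the first moment of `F` dominates that of `G`. -/
lemma setIntegral_id_mul_le_of_crossing {F G : ℝ → ℝ} {s : Set ℝ} (c : ℝ) (hs : MeasurableSet s)
    (hF : Integrable F) (hG : Integrable G)
    (htF : Integrable fun t => t * F t) (htG : Integrable fun t => t * G t)
    (hmass : ∫ t in s, F t = ∫ t in s, G t)
    (hcross : ∀ t ∈ s, 0 ≤ (t - c) * (F t - G t)) :
    ∫ t in s, t * G t ≤ ∫ t in s, t * F t := by
  have h := setIntegral_nonneg (μ := volume) hs hcross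
  have e : (fun t => (t - c) * (F t - G t))
      = fun t => (t * F t - t * G t) - (c * F t - c * G t) := by
    ext t; ring
  have i1 : Integrable fun t => t * F t - t * G t := htF.sub htG
  have i2 : Integrable fun t => c * F t - c * G t := (hF.const_mul c).sub (hG.const_mul c)
  rw [e, integral_sub i1.integrableOn i2.integrableOn,
    integral_sub htF.integrableOn htG.integrableOn,
    integral_sub (hF.const_mul c).integrableOn (hG.const_mul c).integrableOn,
    integral_const_mul, integral_const_mul, hmass] at h
  linarith

lemma mul_rpow_one_div_le_iff {p c u y : ℝ} (hp : 0 < p) (hc : 0 ≤ c) (hu : 0 ≤ u) (hy : 0 ≤ y) :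
    c * u ^ (1 / p) ≤ y ↔ c ^ p * u ≤ y ^ p := by
  have hu' := Real.rpow_nonneg hu (1 / p)
  rw [← Real.rpow_le_rpow_iff (mul_nonneg hc hu') hy hp, Real.mul_rpow hc hu',
    ← Real.rpow_mul hu, one_div_mul_cancel hp.ne', Real.rpow_one]

lemma le_mul_rpow_one_div_iff {p c u y : ℝ} (hp : 0 < p) (hc : 0 ≤ c) (hu : 0 ≤ u) (hy : 0 ≤ y) :
    y ≤ c * u ^ (1 / p) ↔ y ^ p ≤ c ^ p * u := by
  have hu' := Real.rpow_nonneg hu (1 / p)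
  rw [← Real.rpow_le_rpow_iff hy (mul_nonneg hc hu') hp, Real.mul_rpow hc hu',
    ← Real.rpow_mul hu, one_div_mul_cancel hp.ne', Real.rpow_one]

/-- A concave function on its support which lies above an affine function at `t < 0` and meets it
at `0` lies above it in between. -/
lemma affine_lt_of_concaveOn {p A : ℝ} {F : ℝ → ℝ}
    (hconc : ConcaveOn ℝ {t | 0 < F t} fun t => F t ^ p) (h0 : 0 < F 0)
    {t s : ℝ} (ht : 0 < F t) (hts : t < s) (hs : s < 0)
    (h : F 0 ^ p * (1 + t / A) < F t ^ p) :
    0 < F s ∧ F 0 ^ p * (1 + s / A) < F s ^ p := by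
  have ht0 : t < 0 := hts.trans hs
  have hw : 0 < s / t := div_pos_of_neg_of_neg hs ht0
  have hw1 : s / t ≤ 1 := (div_le_one_of_neg ht0).2 hts.le
  have e : (s / t) • t + (1 - s / t) • (0 : ℝ) = s := by
    simp [div_mul_cancel₀ _ ht0.ne]
  have h1 := hconc.1 ht h0 hw.le (sub_nonneg.2 hw1) (by ring)
  have h2 := hconc.2 ht h0 hw.le (sub_nonneg.2 hw1) (by ring)
  rw [e] at h1 h2
  refine ⟨h1, lt_of_lt_of_le ?_ h2⟩
  simp only [smul_eq_mul]
  have e2 : F 0 ^ p * (1 + s / A)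
      = s / t * (F 0 ^ p * (1 + t / A)) + (1 - s / t) * F 0 ^ p := by
    have : s / A = s / t * (t / A) := by rw [div_mul_div_cancel₀ ht0.ne]
    rw [this]; ring
  rw [e2]
  gcongr

/-- A concave function on its support which meets an affine function at `0` and lies above it at
some positive point lies below it at all negative points. -/
lemma lt_affine_of_concaveOn {p A : ℝ} {F : ℝ → ℝ}
    (hconc : ConcaveOn ℝ {t | 0 < F t} fun t => F t ^ p)
    {t r : ℝ} (ht : 0 < F t) (hr : 0 < F r) (ht0 : t < 0) (hr0 : 0 < r)
    (h : F 0 ^ p * (1 + r / A) < F r ^ p) :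
    F t ^ p < F 0 ^ p * (1 + t / A) := by
  have hrt : 0 < r - t := by linarith
  have h2 := hconc.2 ht hr (by positivity : 0 ≤ r / (r - t))
    (div_nonneg (by linarith) hrt.le : 0 ≤ -t / (r - t)) (by field_simp; ring)
  have e : (r / (r - t)) • t + (-t / (r - t)) • r = (0 : ℝ) := by
    simp only [smul_eq_mul]; field_simp; ring
  rw [e] at h2
  simp only [smul_eq_mul] at h2
  have h3 : r * F t ^ p + -t * F r ^ p ≤ (r - t) * F 0 ^ p := by
    have := mul_le_mul_of_nonneg_left h2 hrt.le
    calc _ = (r - t) * (r / (r - t) * F t ^ p + -t / (r - t) * F r ^ p) := by field_simp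
      _ ≤ _ := this
  have h4 : -t * (F 0 ^ p * (1 + r / A)) < -t * F r ^ p :=
    mul_lt_mul_of_pos_left h (by linarith)
  refine lt_of_mul_lt_mul_left (a := r) ?_ hr0.le
  have e2 : r * (F 0 ^ p * (1 + t / A)) = (r - t) * F 0 ^ p - -t * (F 0 ^ p * (1 + r / A)) := by
    ring
  linarith

lemma integral_cone {A q : ℝ} (hA : 0 < A) (hq : 0 < q) (x : ℝ) :
    ∫ t in -A..x, (1 + t / A) ^ q = A * (1 + x / A) ^ (q + 1) / (q + 1) := by
  rw [intervalIntegral.integral_comp_add_div (fun u => u ^ q) hA.ne',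
    integral_rpow (Or.inl (by linarith)), neg_div, div_self hA.ne', add_neg_cancel,
    Real.zero_rpow (by linarith)]
  simp [mul_div_assoc]

lemma continuous_cone {A q : ℝ} (hq : 0 < q) : Continuous fun t : ℝ => (1 + t / A) ^ q :=
  (by fun_prop : Continuous fun t : ℝ => 1 + t / A).rpow_const fun _ => Or.inr hq.le

lemma integral_id_mul_cone {A q x : ℝ} (hA : 0 < A) (hq : 0 < q) (hx : -A ≤ x) :
    ∫ t in -A..x, t * (1 + t / A) ^ q
      = A * (A * (1 + x / A) ^ (q + 2) / (q + 2) - A * (1 + x / A) ^ (q + 1) / (q + 1)) := by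
  have e : EqOn (fun t : ℝ => t * (1 + t / A) ^ q)
      (fun t => A * ((1 + t / A) ^ (q + 1) - (1 + t / A) ^ q)) (uIcc (-A) x) := by
    intro t ht
    rw [uIcc_of_le hx] at ht
    have h : 0 ≤ 1 + t / A := by
      have := div_le_div_of_nonneg_right ht.1 hA.le
      rw [neg_div, div_self hA.ne'] at this
      linarith
    simp only
    rw [Real.rpow_add_one' h (by linarith)]
    field_simp
    ring
  rw [intervalIntegral.integral_congr e, intervalIntegral.integral_const_mul,
    intervalIntegral.integral_sub
      ((continuous_cone (by linarith)).intervalIntegrable _ _)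
      ((continuous_cone hq).intervalIntegrable _ _),
    integral_cone hA (by linarith), integral_cone hA hq]
  norm_num [add_assoc]

/-- A nonnegative function of positive mass and zero first moment has positive mass on both
sides of the origin. -/
lemma setIntegral_pos_of_centered {F : ℝ → ℝ} (hnn : ∀ t, 0 ≤ F t) (hF : Integrable F)
    (htF : Integrable fun t => t * F t) (hpos : 0 < ∫ t, F t) (hcent : ∫ t, t * F t = 0) :
    0 < ∫ t in Iic 0, F t ∧ 0 < ∫ t in Ioi 0, F t := by
  have hsplit : ∀ g : ℝ → ℝ, Integrable g →
      (∫ t in Iic 0, g t) + ∫ t in Ioi 0, g t = ∫ t, g t := fun g hg => by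
    rw [← integral_add_compl measurableSet_Iic hg, compl_Iic]
  have key : ∀ s : Set ℝ, ∫ t in s, F t = 0 → ∫ t in s, t * F t = 0 := by
    intro s h
    rw [setIntegral_eq_zero_iff_of_nonneg_ae (Filter.Eventually.of_forall hnn)
      hF.integrableOn] at h
    refine integral_eq_zero_of_ae ?_
    filter_upwards [h] with t ht
    simp_all
  have hne : ∀ᵐ t : ℝ, t ≠ 0 := by simp [ae_iff]
  have key2 : ∀ s : Set ℝ, MeasurableSet s → (∀ t ∈ s, 0 ≤ t) ∨ (∀ t ∈ s, t ≤ 0) →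
      ∫ t in s, t * F t = 0 → ∫ t in s, F t = 0 := by
    intro s hs hsgn h
    have hz : ∀ᵐ t ∂volume.restrict s, t * F t = 0 := by
      rcases hsgn with hs' | hs'
      · rw [setIntegral_eq_zero_iff_of_nonneg_ae ((ae_restrict_iff' hs).2
          (Filter.Eventually.of_forall fun t ht => mul_nonneg (hs' t ht) (hnn t)))
          htF.integrableOn] at h
        exact h
      · have h' : ∫ t in s, -(t * F t) = 0 := by rw [integral_neg, h, neg_zero]
        rw [setIntegral_eq_zero_iff_of_nonneg_ae ((ae_restrict_iff' hs).2
          (Filter.Eventually.of_forall fun t ht => neg_nonneg.2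
            (mul_nonpos_of_nonpos_of_nonneg (hs' t ht) (hnn t))))
          htF.neg.integrableOn] at h'
        filter_upwards [h'] with t ht
        simpa using ht
    refine integral_eq_zero_of_ae ?_
    filter_upwards [hz, ae_restrict_of_ae hne] with t ht ht'
    simpa [ht'] using ht
  have s1 := hsplit F hF
  have s2 := hsplit _ htF
  have n1 : 0 ≤ ∫ t in Iic 0, F t := integral_nonneg hnn
  have n2 : 0 ≤ ∫ t in Ioi 0, F t := integral_nonneg hnn
  constructor
  · refine n1.lt_of_ne' fun h => ?_
    have := key2 _ measurableSet_Ioi (Or.inl fun t ht => (mem_Ioi.1 ht).le)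
      (by linarith [key _ h])
    linarith
  · refine n2.lt_of_ne' fun h => ?_
    have := key2 _ measurableSet_Iic (Or.inr fun t ht => ht)
      (by linarith [key _ h])
    linarith

/-- The truncated cone with apex `-A`, height `c` at the origin, and base at `β`. -/
noncomputable def truncatedCone (A β c q : ℝ) : ℝ → ℝ :=
  (Ioc (-A) β).indicator fun t => c * (1 + t / A) ^ q

lemma integrable_truncatedCone {A β c q : ℝ} (hq : 0 < q) :
    Integrable (truncatedCone A β c q) :=
  (integrable_indicator_iff measurableSet_Ioc).2
    ((continuous_cone hq).const_mul c).integrableOn_Ioc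

lemma id_mul_truncatedCone {A β c q : ℝ} : (fun t => t * truncatedCone A β c q t)
    = (Ioc (-A) β).indicator fun t => c * (t * (1 + t / A) ^ q) := by
  ext t
  simp only [truncatedCone, indicator_apply]
  split_ifs <;> ring

lemma integrable_id_mul_truncatedCone {A β c q : ℝ} (hq : 0 < q) :
    Integrable fun t => t * truncatedCone A β c q t := by
  rw [id_mul_truncatedCone]
  exact (integrable_indicator_iff measurableSet_Ioc).2
    ((continuous_id.mul (continuous_cone hq)).const_mul c).integrableOn_Ioc

lemma integral_truncatedCone {A β c q : ℝ} (hA : 0 < A) (hq : 0 < q) (hβ : -A ≤ β) :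
    ∫ t, truncatedCone A β c q t = c * (A * (1 + β / A) ^ (q + 1) / (q + 1)) := by
  rw [truncatedCone, integral_indicator measurableSet_Ioc,
    ← intervalIntegral.integral_of_le hβ, intervalIntegral.integral_const_mul,
    integral_cone hA hq]

lemma integral_id_mul_truncatedCone {A β c q : ℝ} (hA : 0 < A) (hq : 0 < q) (hβ : -A ≤ β) :
    ∫ t, t * truncatedCone A β c q t = c * (A * (A * (1 + β / A) ^ (q + 2) / (q + 2)
      - A * (1 + β / A) ^ (q + 1) / (q + 1))) := by
  rw [id_mul_truncatedCone, integral_indicator measurableSet_Ioc,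
    ← intervalIntegral.integral_of_le hβ, intervalIntegral.integral_const_mul,
    integral_id_mul_cone hA hq hβ]

lemma setIntegral_Iic_truncatedCone {A β c q : ℝ} (hA : 0 < A) (hq : 0 < q) (hβ : 0 ≤ β) :
    ∫ t in Iic 0, truncatedCone A β c q t = c * (A / (q + 1)) := by
  rw [truncatedCone, setIntegral_indicator measurableSet_Ioc, inter_comm, Ioc_inter_Iic,
    min_eq_right hβ, ← intervalIntegral.integral_of_le (by linarith),
    intervalIntegral.integral_const_mul, integral_cone hA hq]
  simp

lemma truncatedCone_nonneg {A β c q : ℝ} (hA : 0 < A) (hc : 0 ≤ c) (t : ℝ) :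
    0 ≤ truncatedCone A β c q t := by
  refine indicator_nonneg (fun t ht => mul_nonneg hc (Real.rpow_nonneg ?_ _)) t
  have := div_le_div_of_nonneg_right ht.1.le hA.le
  rw [neg_div, div_self hA.ne'] at this
  linarith

lemma one_add_div_pos {A t : ℝ} (hA : 0 < A) (ht : -A < t) : 0 < 1 + t / A := by
  have := div_lt_div_of_pos_right ht hA
  rw [neg_div, div_self hA.ne'] at this
  linarith

/-- On the negative side a `p`-concave function crosses a cone of equal height at the origin
at most once, from below. -/
lemma exists_crossing {p A β : ℝ} {F : ℝ → ℝ} (hp : 0 < p) (hA : 0 < A) (hβ : 0 ≤ β)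
    (hconc : ConcaveOn ℝ {t | 0 < F t} fun t => F t ^ p)
    (hbdd : BddBelow {t | 0 < F t}) (h0 : 0 < F 0) :
    ∃ c, ∀ t ∈ Iic (0 : ℝ), 0 ≤ (t - c) * (F t - truncatedCone A β (F 0) (1 / p) t) := by
  set G := truncatedCone A β (F 0) (1 / p) with hG
  have hG0 : G 0 = F 0 := by
    simp [hG, truncatedCone, hA, hβ]
  have hlt : ∀ t < 0, 0 < F t → (G t < F t ↔ F 0 ^ p * (1 + t / A) < F t ^ p) := by
    intro t ht hFt
    by_cases h : -A < t
    · have : G t = F 0 * (1 + t / A) ^ (1 / p) :=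
        indicator_of_mem (show t ∈ Ioc (-A) β from ⟨h, ht.le.trans hβ⟩) _
      rw [this, ← not_le, ← not_le,
        le_mul_rpow_one_div_iff hp h0.le (one_add_div_pos hA h).le hFt.le]
    · have : G t = 0 := indicator_of_notMem (fun h' => h h'.1) _
      have h' : 1 + t / A ≤ 0 := by
        have := div_le_div_of_nonneg_right (not_lt.1 h) hA.le
        rw [neg_div, div_self hA.ne'] at this
        linarith
      rw [this]
      exact iff_of_true hFt ((mul_nonpos_of_nonneg_of_nonpos (by positivity) h').trans_lt
        (by positivity))
  set T := insert (0 : ℝ) {t | t < 0 ∧ G t < F t} with hT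
  have hTpos : ∀ t, G t < F t → 0 < F t := fun t ht =>
    (truncatedCone_nonneg hA h0.le t).trans_lt ht
  have hTb : BddBelow T := (hbdd.mono fun t ht => hTpos t ht.2).insert 0
  refine ⟨sInf T, fun t ht => ?_⟩
  rcases (mem_Iic.1 ht).eq_or_lt with rfl | ht
  · simp [hG0]
  rcases lt_or_ge (sInf T) t with h | h
  · obtain ⟨s, hs, hst⟩ := exists_lt_of_csInf_lt (insert_nonempty _ _) h
    rcases hs with rfl | hs
    · linarith
    have hFs := hTpos s hs.2
    obtain ⟨h1, h2⟩ := affine_lt_of_concaveOn hconc h0 hFs hst ht ((hlt s hs.1 hFs).1 hs.2)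
    exact mul_nonneg (by linarith) (sub_nonneg.2 ((hlt t ht h1).2 h2).le)
  · rcases h.eq_or_lt with rfl | h
    · simp
    have : ¬ G t < F t := fun h' => (notMem_of_lt_csInf h hTb) (Or.inr ⟨ht, h'⟩)
    exact mul_nonneg_of_nonpos_of_nonpos (by linarith) (by linarith)

/-- A `p`-concave function with the same height at the origin and the same mass on the negative
side as a cone lies below the cone on the positive side. -/
lemma le_cone_of_pos {p A β : ℝ} {F : ℝ → ℝ} (hp : 0 < p) (hA : 0 < A) (hβ : 0 ≤ β)
    (hnn : ∀ t, 0 ≤ F t) (hF : Integrable F)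
    (hconc : ConcaveOn ℝ {t | 0 < F t} fun t => F t ^ p) (h0 : 0 < F 0)
    (hmass : ∫ t in Iic 0, F t = ∫ t in Iic 0, truncatedCone A β (F 0) (1 / p) t)
    {r : ℝ} (hr : 0 < r) : F r ≤ F 0 * (1 + r / A) ^ (1 / p) := by
  set G := truncatedCone A β (F 0) (1 / p) with hG
  have hGi : Integrable G := integrable_truncatedCone (by positivity)
  by_contra hcon
  have hrA : 0 < 1 + r / A := by positivity
  have hFr : 0 < F r := lt_of_le_of_lt (by positivity) (not_le.1 hcon)
  rw [le_mul_rpow_one_div_iff hp h0.le hrA.le hFr.le, not_le] at hcon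
  have hlow : ∀ t < 0, 0 < F t → F t ^ p < F 0 ^ p * (1 + t / A) := fun t ht hFt =>
    lt_affine_of_concaveOn hconc hFt hFr ht hr hcon
  have hstrict : ∀ t ∈ Ioo (-A) 0, F t < G t := by
    intro t ht
    have hu := one_add_div_pos hA ht.1
    have : G t = F 0 * (1 + t / A) ^ (1 / p) :=
      indicator_of_mem (show t ∈ Ioc (-A) β from ⟨ht.1, ht.2.le.trans hβ⟩) _
    rw [this]
    rcases (hnn t).eq_or_lt with h | h
    · rw [← h]; positivity
    · rw [← not_le, mul_rpow_one_div_le_iff hp h0.le hu.le h.le, not_le]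
      exact hlow t ht.2 h
  have hle : ∀ t ∈ Iic (0 : ℝ), F t ≤ G t := by
    intro t ht
    rcases (mem_Iic.1 ht).eq_or_lt with rfl | ht
    · simp [hG, truncatedCone, hA, hβ]
    rcases lt_or_ge (-A) t with h | h
    · exact (hstrict t ⟨h, ht⟩).le
    rcases (hnn t).eq_or_lt with h' | h'
    · rw [← h']; exact truncatedCone_nonneg hA h0.le t
    have h1 := hlow t ht h'
    have h2 : 1 + t / A ≤ 0 := by
      have := div_le_div_of_nonneg_right h hA.le
      rw [neg_div, div_self hA.ne'] at this
      linarith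
    have h3 : F 0 ^ p * (1 + t / A) ≤ 0 := mul_nonpos_of_nonneg_of_nonpos (by positivity) h2
    have h4 : 0 < F t ^ p := by positivity
    linarith
  have hz : ∫ t in Iic 0, (G t - F t) = 0 := by
    rw [integral_sub hGi.integrableOn hF.integrableOn, hmass, sub_self]
  rw [setIntegral_eq_zero_iff_of_nonneg_ae ((ae_restrict_iff' measurableSet_Iic).2
    (Filter.Eventually.of_forall fun t ht => sub_nonneg.2 (hle t ht)))
    (hGi.sub hF).integrableOn] at hz
  have hz' := (ae_restrict_iff' measurableSet_Iic).1 hz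
  have : volume (Ioo (-A) 0) = 0 := by
    refine measure_mono_null (fun t ht => ?_) hz'
    simp only [mem_compl_iff, mem_ofPred_eq, not_forall]
    exact ⟨ht.2.le, (sub_pos.2 (hstrict t ht)).ne'⟩
  simp [Real.volume_Ioo] at this
  linarith

/-- Grünbaum's inequality for an integrable `p`-concave function on the line centered at `0`. -/
theorem grunbaum_of_concaveOn {p : ℝ} {F : ℝ → ℝ} (hp : 0 < p) (hnn : ∀ t, 0 ≤ F t)
    (hF : Integrable F) (htF : Integrable fun t => t * F t)
    (hconc : ConcaveOn ℝ {t | 0 < F t} fun t => F t ^ p) (hbdd : BddBelow {t | 0 < F t})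
    (hpos : 0 < ∫ t, F t) (hcent : ∫ t, t * F t = 0) :
    ((p + 1) / (2 * p + 1)) ^ ((p + 1) / p) ≤ (∫ t in Iic 0, F t) / ∫ t, F t := by
  obtain ⟨hm1, hm2⟩ := setIntegral_pos_of_centered hnn hF htF hpos hcent
  have hsplit : ∀ g : ℝ → ℝ, Integrable g →
      (∫ t in Iic 0, g t) + ∫ t in Ioi 0, g t = ∫ t, g t := fun g hg => by
    rw [← integral_add_compl measurableSet_Iic hg, compl_Iic]
  have hex : ∀ s : Set ℝ, MeasurableSet s → 0 < ∫ t in s, F t → ∃ t ∈ s, 0 < F t := by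
    intro s hs h
    by_contra! hcon
    exact h.not_ge (setIntegral_nonpos hs hcon)
  have h0 : 0 < F 0 := by
    obtain ⟨x, hx, hFx⟩ := hex _ measurableSet_Iic hm1
    obtain ⟨y, hy, hFy⟩ := hex _ measurableSet_Ioi hm2
    exact hconc.1.ordConnected.out hFx hFy ⟨hx, (mem_Ioi.1 hy).le⟩
  set m := ∫ t in Iic 0, F t with hm
  set M := ∫ t, F t with hM
  have hmM : m ≤ M := by linarith [hsplit F hF]
  set q := 1 / p with hq
  have hq0 : 0 < q := by positivity
  set A := m * (q + 1) / F 0 with hAdef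
  have hA : 0 < A := by positivity
  set R := (M / m) ^ (1 / (q + 1)) with hR
  have hR1 : 1 ≤ R := Real.one_le_rpow ((one_le_div hm1).2 hmM) (by positivity)
  have hRq : R ^ (q + 1) = M / m := by
    rw [hR, ← Real.rpow_mul (by positivity), one_div_mul_cancel (by positivity), Real.rpow_one]
  set β := A * (R - 1) with hβdef
  have hβ : 0 ≤ β := mul_nonneg hA.le (by linarith)
  have hβR : 1 + β / A = R := by rw [hβdef]; field_simp; ring
  set G := truncatedCone A β (F 0) q with hG
  have hGi : Integrable G := integrable_truncatedCone hq0
  have htG : Integrable fun t => t * G t := integrable_id_mul_truncatedCone hq0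
  have hmass1 : m = ∫ t in Iic 0, G t := by
    rw [hG, setIntegral_Iic_truncatedCone hA hq0 hβ, hAdef]
    field_simp
  have hmass : M = ∫ t, G t := by
    rw [hG, integral_truncatedCone hA hq0 (by linarith), hβR, hRq, hAdef]
    field_simp
  have hmass2 : ∫ t in Ioi 0, F t = ∫ t in Ioi 0, G t := by
    linarith [hsplit F hF, hsplit G hGi]
  obtain ⟨c, hc⟩ := exists_crossing hp hA hβ hconc hbdd h0
  have hleft := setIntegral_id_mul_le_of_crossing c measurableSet_Iic hF hGi htF htG hmass1 hc
  have hright := setIntegral_id_mul_le_of_crossing β measurableSet_Ioi hF hGi htF htG hmass2 (by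
    intro t ht
    rcases le_or_gt t β with h | h
    · have e : G t = F 0 * (1 + t / A) ^ q :=
        indicator_of_mem (show t ∈ Ioc (-A) β from ⟨by linarith [mem_Ioi.1 ht], h⟩) _
      have := le_cone_of_pos hp hA hβ hnn hF hconc h0 hmass1 (mem_Ioi.1 ht)
      rw [e]
      exact mul_nonneg_of_nonpos_of_nonpos (by linarith) (by linarith)
    · have e : G t = 0 := indicator_of_notMem (fun h' => h.not_ge h'.2) _
      rw [e, sub_zero]
      exact mul_nonneg (by linarith) (hnn t))
  have hmoment : ∫ t, t * G t ≤ 0 := by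
    linarith [hsplit _ htF, hsplit _ htG]
  rw [hG, integral_id_mul_truncatedCone hA hq0 (by linarith), hβR] at hmoment
  have hRpos : 0 < R := by linarith
  have hRle : R ≤ (q + 2) / (q + 1) := by
    rw [show q + 2 = (q + 1) + 1 by ring, Real.rpow_add_one hRpos.ne'] at hmoment
    have hK : 0 < F 0 * A * A * R ^ (q + 1) := by positivity
    have : F 0 * A * A * R ^ (q + 1) * (R / (q + 1 + 1) - 1 / (q + 1)) ≤ 0 := by
      refine le_trans (le_of_eq ?_) hmoment
      ring
    have := nonpos_of_mul_nonpos_right this hK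
    rw [sub_nonpos, div_le_div_iff₀ (by positivity) (by positivity)] at this
    rw [le_div_iff₀ (by positivity)]
    linarith
  have hratio : m / M = (1 / R) ^ (q + 1) := by
    rw [Real.div_rpow zero_le_one hRpos.le, hRq, Real.one_rpow, one_div_div]
  have e1 : (p + 1) / p = q + 1 := by rw [hq]; field_simp; ring
  have e2 : (p + 1) / (2 * p + 1) = (q + 1) / (q + 2) := by rw [hq]; field_simp; ring
  rw [hratio, e1, e2]
  refine Real.rpow_le_rpow (by positivity) ?_ (by positivity)
  rw [← one_div_div]
  exact one_div_le_one_div_of_le hRpos hRle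

theorem stmt_2 (a b p : ℝ) (f : ℝ → ℝ) (ha : a < 0) (hb : 0 < b)
    (hp : 0 < p)
    (hnn : ∀ t ∈ Set.Icc a b, 0 ≤ f t)
    (hconc : ConcaveOn ℝ (Set.Icc a b ∩ {t | 0 < f t}) (fun t => f t ^ p))
    (hint : 0 < ∫ t in a..b, f t)
    (hcent : (∫ t in a..b, t * f t) / (∫ t in a..b, f t) = 0) :
    (∫ t in a..(0 : ℝ), f t) / (∫ t in a..b, f t) ≥
      ((p + 1) / (2 * p + 1)) ^ ((p + 1) / p) := by
  have hab : a ≤ b := by linarith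
  have hfi : IntervalIntegrable f volume a b := by
    by_contra h
    rw [intervalIntegral.integral_undef h] at hint
    exact lt_irrefl _ hint
  have htfi : IntervalIntegrable (fun t => t * f t) volume a b :=
    hfi.continuousOn_mul continuousOn_id
  have hmom : ∫ t in a..b, t * f t = 0 := (div_eq_zero_iff.1 hcent).resolve_right hint.ne'
  set F := (Icc a b).indicator f with hF
  have htF : (fun t => t * F t) = (Icc a b).indicator fun t => t * f t := by
    ext t
    simp only [hF, indicator_apply]
    split_ifs <;> simp
  have hsupp : {t | 0 < F t} = Icc a b ∩ {t | 0 < f t} := by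
    ext t
    simp only [hF, indicator_apply, mem_ofPred_eq, mem_inter_iff]
    split_ifs with h <;> simp [h]
  have key := grunbaum_of_concaveOn (F := F) hp (fun t => indicator_nonneg hnn t)
    ((integrable_indicator_iff measurableSet_Icc).2
      ((intervalIntegrable_iff_integrableOn_Icc_of_le hab).1 hfi))
    (by
      rw [htF]
      exact (integrable_indicator_iff measurableSet_Icc).2
        ((intervalIntegrable_iff_integrableOn_Icc_of_le hab).1 htfi))
    (by
      rw [hsupp]
      refine hconc.congr fun t ht => ?_
      simp [hF, indicator_of_mem ht.1])
    (by rw [hsupp]; exact bddBelow_Icc.mono inter_subset_left)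
  have i1 : ∫ t, F t = ∫ t in a..b, f t := by
    rw [hF, integral_indicator measurableSet_Icc, integral_Icc_eq_integral_Ioc,
      intervalIntegral.integral_of_le hab]
  have i2 : ∫ t, t * F t = ∫ t in a..b, t * f t := by
    rw [htF, integral_indicator measurableSet_Icc, integral_Icc_eq_integral_Ioc,
      intervalIntegral.integral_of_le hab]
  have i3 : ∫ t in Iic 0, F t = ∫ t in a..0, f t := by
    have e : Iic 0 ∩ Icc a b = Icc a 0 := by
      ext t
      simp only [mem_inter_iff, mem_Iic, mem_Icc]
      constructor
      · rintro ⟨h1, h2, h3⟩; exact ⟨h2, h1⟩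
      · rintro ⟨h1, h2⟩; exact ⟨h2, h1, by linarith⟩
    rw [hF, setIntegral_indicator measurableSet_Icc, e, integral_Icc_eq_integral_Ioc,
      intervalIntegral.integral_of_le ha.le]
  rw [i1, i2, i3] at key
  exact key hint hmom
end

section
/- Let f:[-b,b]→[0,∞) be a p-concave function for some p>0, with positive integral, whose support is [-b,b] (midpoint at 0). Then (∫_{-b}^0 f(t) dt)/(∫_{-b}^b f(t) dt) ≥ (1/2)^{(p+1)/p}. -/
theorem ConcaveOn.half_le_midpoint_left {a c : ℝ} {g : ℝ → ℝ}
    (hg : ConcaveOn ℝ (Set.Ioo a c) g) (hnn : ∀ t ∈ Set.Ioo a c, 0 ≤ g t)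
    {s : ℝ} (hs : s ∈ Set.Ioo a c) : 1 / 2 * g s ≤ g ((a + s) / 2) := by
  obtain ⟨has, hsc⟩ := hs
  set x := (a + s) / 2 with hx
  have hax : a < x := by linarith
  have hxs : x < s := by linarith
  have key : ∀ y ∈ Set.Ioo a x, g s * (x - y) ≤ g x * (s - y) := by
    rintro y ⟨hay, hyx⟩
    have hd : 0 < s - y := by linarith
    have hα : 0 ≤ (s - x) / (s - y) := div_nonneg (by linarith) hd.le
    have hβ : 0 ≤ (x - y) / (s - y) := div_nonneg (by linarith) hd.le
    have hy : y ∈ Set.Ioo a c := ⟨hay, by linarith⟩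
    have h := hg.2 hy ⟨has, hsc⟩ hα hβ (by field_simp; ring)
    have hcomb : (s - x) / (s - y) * y + (x - y) / (s - y) * s = x := by
      field_simp
      ring
    simp only [smul_eq_mul, hcomb] at h
    have hgy : 0 ≤ (s - x) / (s - y) * g y := mul_nonneg hα (hnn y hy)
    have h' : g s * (x - y) / (s - y) ≤ g x := by
      have : g s * (x - y) / (s - y) = (x - y) / (s - y) * g s := by ring
      linarith
    exact (div_le_iff₀ hd).1 h'
  have hlim : g s * (x - a) ≤ g x * (s - a) := by
    refine ContinuousWithinAt.closure_le (s := Set.Ioo a x) (x := a)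
      (f := fun y => g s * (x - y)) (g := fun y => g x * (s - y)) ?_ ?_ ?_ key
    · rw [closure_Ioo hax.ne]
      exact Set.left_mem_Icc.2 hax.le
    · exact Continuous.continuousWithinAt (by fun_prop)
    · exact Continuous.continuousWithinAt (by fun_prop)
  have hd : 0 < s - a := by linarith
  refine le_of_mul_le_mul_right ?_ hd
  calc 1 / 2 * g s * (s - a) = g s * (x - a) := by rw [hx]; ring
    _ ≤ g x * (s - a) := hlim

theorem stmt_3 (b p : ℝ) (f : ℝ → ℝ) (hb : 0 < b) (hp : 0 < p)
    (hnn : ∀ t ∈ Set.Icc (-b) b, 0 ≤ f t)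
    (hsupp : ∀ t ∈ Set.Ioo (-b) b, 0 < f t)
    (hconc : ConcaveOn ℝ (Set.Ioo (-b) b) (fun t => f t ^ p))
    (hint : 0 < ∫ t in (-b)..b, f t) :
    (∫ t in (-b)..(0 : ℝ), f t) / (∫ t in (-b)..b, f t) ≥
      ((1 : ℝ) / 2) ^ ((p + 1) / p) := by
  have hi : IntervalIntegrable f MeasureTheory.volume (-b) b := by
    by_contra h
    rw [intervalIntegral.integral_undef h] at hint
    exact hint.false
  have hi0 : IntervalIntegrable f MeasureTheory.volume (-b) 0 :=
    hi.mono_set (by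
      rw [Set.uIcc_of_le (by linarith), Set.uIcc_of_le (by linarith)]
      exact Set.Icc_subset_Icc_right hb.le)
  have hpt : ∀ s ∈ Set.Ioo (-b) b, (1 / 2 : ℝ) ^ (1 / p) * f s ≤ f (s / 2 - b / 2) := by
    intro s hs
    have hmem : s / 2 - b / 2 ∈ Set.Ioo (-b) b := ⟨by linarith [hs.1], by linarith [hs.2]⟩
    have h := hconc.half_le_midpoint_left
      (fun t ht => (Real.rpow_pos_of_pos (hsupp t ht) p).le) hs
    rw [show (-b + s) / 2 = s / 2 - b / 2 by ring] at h
    have hc : (0 : ℝ) ≤ (1 / 2 : ℝ) ^ (1 / p) := by positivity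
    rw [← Real.rpow_le_rpow_iff (mul_nonneg hc (hsupp s hs).le) (hsupp _ hmem).le hp,
      Real.mul_rpow hc (hsupp s hs).le, ← Real.rpow_mul (by norm_num),
      one_div_mul_cancel hp.ne', Real.rpow_one]
    exact h
  have hsub : ∫ s in (-b)..b, f (s / 2 - b / 2) = 2 * ∫ t in (-b)..(0 : ℝ), f t := by
    rw [intervalIntegral.integral_comp_div_sub f two_ne_zero, smul_eq_mul]
    congr 2 <;> ring
  have hi' : IntervalIntegrable (fun s => f (s / 2 - b / 2)) MeasureTheory.volume (-b) b := by
    have h := (hi0.comp_sub_right (b / 2)).comp_mul_left (c := (2 : ℝ)⁻¹)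
    convert h using 1
    · ext s
      congr 1
      ring
    · field_simp; ring
    · field_simp; ring
  have hmono := intervalIntegral.integral_mono_on_of_le_Ioo (by linarith : -b ≤ b)
    (hi.const_mul ((1 / 2 : ℝ) ^ (1 / p))) hi' hpt
  rw [intervalIntegral.integral_const_mul, hsub] at hmono
  have hpow : (1 / 2 : ℝ) ^ ((p + 1) / p) = 1 / 2 * (1 / 2 : ℝ) ^ (1 / p) := by
    rw [add_div, div_self hp.ne', Real.rpow_add (by norm_num), Real.rpow_one]
  rw [ge_iff_le, le_div_iff₀ hint, hpow]
  linarith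
end

section
/- Let r≥1 and p>0, and let f:[a,b]→[0,∞) be a p-concave function with positive integral such that a<0<b and the r-powered centroid (∫_a^b t f(t)^r dt)/(∫_a^b f(t)^r dt) equals 0. Then (∫_a^0 f(t) dt)/(∫_a^b f(t) dt) ≥ ((p+1)/(2p+r))^{(p+1)/p}. -/
open Set MeasureTheory intervalIntegral

/-- `f` is positive on the nonempty interval `(α, β)`, and `f ^ p` is concave there. -/
structure PosPowConcaveOn (p α β : ℝ) (f : ℝ → ℝ) : Prop where
  lt : α < β
  pos : ∀ x ∈ Ioo α β, 0 < f x
  concave : ConcaveOn ℝ (Ioo α β) (fun t => f t ^ p)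

namespace PosPowConcaveOn

variable {p α β : ℝ} {f : ℝ → ℝ}

theorem continuousOn (h : PosPowConcaveOn p α β f) (hp : 0 < p) : ContinuousOn f (Ioo α β) := by
  have h1 := (h.concave.continuousOn isOpen_Ioo).rpow_const (p := p⁻¹)
    (fun x _ => Or.inr (by positivity))
  refine h1.congr fun x hx => ?_
  exact (Real.rpow_rpow_inv (h.pos x hx).le hp.ne').symm

theorem exists_le (h : PosPowConcaveOn p α β f) (hp : 0 < p) :
    ∃ C, ∀ x ∈ Ioo α β, f x ≤ C := by
  refine ⟨(2 * f ((α + β) / 2) ^ p) ^ p⁻¹, fun x hx => ?_⟩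
  have hy : α + β - x ∈ Ioo α β := ⟨by linarith [hx.2], by linarith [hx.1]⟩
  have hhalf : (0 : ℝ) ≤ 1 / 2 := by norm_num
  have h1 := h.concave.2 hx hy hhalf hhalf (by norm_num)
  have h2 : (1 / 2 : ℝ) • x + (1 / 2 : ℝ) • (α + β - x) = (α + β) / 2 := by
    simp only [smul_eq_mul]; ring
  rw [h2] at h1
  simp only [smul_eq_mul] at h1
  have h3 := Real.rpow_nonneg (h.pos _ hy).le p
  rw [← Real.rpow_rpow_inv (h.pos x hx).le hp.ne']
  exact Real.rpow_le_rpow (Real.rpow_nonneg (h.pos x hx).le p) (by linarith) (by positivity)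

theorem integrableOn_rpow (h : PosPowConcaveOn p α β f) (hp : 0 < p) {q : ℝ} (hq : 0 ≤ q) :
    IntegrableOn (fun t => f t ^ q) (Icc α β) := by
  obtain ⟨C, hC⟩ := h.exists_le hp
  rw [integrableOn_Icc_iff_integrableOn_Ioo]
  have hm : AEStronglyMeasurable (fun t => f t ^ q) (volume.restrict (Ioo α β)) :=
    ((h.continuousOn hp).rpow_const (fun x _ => Or.inr hq)).aestronglyMeasurable measurableSet_Ioo
  refine Integrable.of_bound hm (C ^ q) ?_
  refine (ae_restrict_iff' measurableSet_Ioo).2 (Filter.Eventually.of_forall fun x hx => ?_)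
  rw [Real.norm_of_nonneg (Real.rpow_nonneg (h.pos x hx).le q)]
  exact Real.rpow_le_rpow (h.pos x hx).le (hC x hx) hq

theorem integrableOn (h : PosPowConcaveOn p α β f) (hp : 0 < p) :
    IntegrableOn f (Icc α β) := by
  simpa using h.integrableOn_rpow hp zero_le_one

theorem comp_neg (h : PosPowConcaveOn p α β f) :
    PosPowConcaveOn p (-β) (-α) (fun t => f (-t)) := by
  refine ⟨neg_lt_neg h.lt, fun x hx => h.pos _ ⟨by linarith [hx.2], by linarith [hx.1]⟩, ?_⟩
  refine ⟨convex_Ioo _ _, fun x hx y hy a b ha hb hab => ?_⟩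
  have h1 := h.concave.2 (x := -x) ⟨by linarith [hx.2], by linarith [hx.1]⟩
    (y := -y) ⟨by linarith [hy.2], by linarith [hy.1]⟩ ha hb hab
  have h2 : a • (-x) + b • (-y) = -(a • x + b • y) := by
    simp only [smul_eq_mul]; ring
  rwa [h2] at h1

theorem hasDerivAt_affine_rpow (c d A : ℝ) {p : ℝ} (hp : 0 < p) (hA : A ≠ 0) (x : ℝ) :
    HasDerivAt (fun x => (d + A * (x - c)) ^ (1 / p + 1) / (A * (1 / p + 1)))
      ((d + A * (x - c)) ^ (1 / p)) x := by
  have hp' : 0 < 1 / p := by positivity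
  have h1 : HasDerivAt (fun x => d + A * (x - c)) A x := by
    simpa using (((hasDerivAt_id x).sub_const c).const_mul A).const_add d
  have h2 := (h1.rpow_const (p := 1 / p + 1) (Or.inr (by linarith))).div_const (A * (1 / p + 1))
  refine h2.congr_deriv ?_
  rw [add_sub_cancel_right]
  field_simp

/-- The quotient `f ^ (p + 1) / ∫_α^t f` is nonincreasing in `t`. -/
theorem rpow_mul_integral_left_le (h : PosPowConcaveOn p α β f) (hp : 0 < p) {s t : ℝ}
    (hs : s ∈ Ioo α β) (ht : t ∈ Ioo α β) (hst : s ≤ t) :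
    f t ^ (p + 1) * ∫ x in α..s, f x ≤ f s ^ (p + 1) * ∫ x in α..t, f x := by
  rcases hst.eq_or_lt with rfl | hst
  · rfl
  have hint := h.integrableOn hp
  have hi : ∀ u v, u ∈ Icc α β → v ∈ Icc α β → IntegrableOn f (Icc u v) := fun u v hu hv =>
    hint.mono_set (Icc_subset_Icc hu.1 hv.2)
  have hii : ∀ u v, u ≤ v → u ∈ Icc α β → v ∈ Icc α β → IntervalIntegrable f volume u v :=
    fun u v huv hu hv => (intervalIntegrable_iff_integrableOn_Icc_of_le huv).2 (hi u v hu hv)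
  have hα : α ∈ Icc α β := left_mem_Icc.2 h.lt.le
  have hs' := Ioo_subset_Icc_self hs
  have ht' := Ioo_subset_Icc_self ht
  have hadd := integral_add_adjacent_intervals (hii α s hs.1.le hα hs') (hii s t hst.le hs' ht')
  have hFs : 0 ≤ ∫ x in α..s, f x :=
    (intervalIntegral_pos_of_pos_on (hii α s hs.1.le hα hs')
      (fun x hx => h.pos x ⟨hx.1, hx.2.trans hs.2⟩) hs.1).le
  have hFst : 0 ≤ ∫ x in s..t, f x :=
    (intervalIntegral_pos_of_pos_on (hii s t hst.le hs' ht')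
      (fun x hx => h.pos x ⟨hs.1.trans hx.1, hx.2.trans ht.2⟩) hst).le
  have hfs := h.pos s hs
  have hft := h.pos t ht
  rcases le_or_gt (f t) (f s) with hle | hlt
  · have h1 : f t ^ (p + 1) ≤ f s ^ (p + 1) := Real.rpow_le_rpow hft.le hle (by linarith)
    have h2 : 0 ≤ f s ^ (p + 1) := Real.rpow_nonneg hfs.le _
    exact mul_le_mul h1 (by linarith) hFs h2
  set A := (f t ^ p - f s ^ p) / (t - s) with hA
  have hts : 0 < t - s := sub_pos.2 hst
  have hApos : 0 < A := div_pos (sub_pos.2 (Real.rpow_lt_rpow hfs.le hlt hp)) hts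
  have hAts : A * (t - s) = f t ^ p - f s ^ p := by rw [hA]; field_simp
  have hleft : ∀ x ∈ Ioo α s, f x ^ p ≤ f s ^ p + A * (x - s) := fun x hx => by
    have h1 := h.concave.slope_anti_adjacent (x := x) ⟨hx.1, hx.2.trans hs.2⟩ ht hx.2 hst
    have hsx : 0 < s - x := sub_pos.2 hx.2
    rw [← hA, le_div_iff₀ hsx] at h1
    linarith
  have hright : ∀ x ∈ Ioo s t, f s ^ p + A * (x - s) ≤ f x ^ p := fun x hx => by
    have h1 := h.concave.slope_anti_adjacent hs ht hx.1 hx.2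
    rw [div_le_div_iff₀ (sub_pos.2 hx.2) (sub_pos.2 hx.1)] at h1
    refine le_of_mul_le_mul_right ?_ hts
    have : A * (x - s) * (t - s) = (f t ^ p - f s ^ p) * (x - s) := by rw [← hAts]; ring
    rw [add_mul, this]
    linarith
  have hp' : 0 < 1 / p := by positivity
  have hlα : 0 ≤ f s ^ p + A * (α - s) := by
    by_contra! hneg
    have hfsp : 0 < f s ^ p := Real.rpow_pos_of_pos hfs p
    have hz : A * (f s ^ p / A) = f s ^ p := by field_simp
    have hzpos : 0 < f s ^ p / A := by positivity
    have hzmem : s - f s ^ p / A ∈ Ioo α s := by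
      refine ⟨?_, by linarith⟩
      refine lt_of_mul_lt_mul_left ?_ hApos.le
      rw [mul_sub, hz]; linarith
    have h1 := hleft _ hzmem
    have h2 := Real.rpow_pos_of_pos (h.pos _ ⟨hzmem.1, hzmem.2.trans hs.2⟩) p
    have : A * (s - f s ^ p / A - s) = - f s ^ p := by rw [← hz]; field_simp; ring
    linarith
  have hd := hasDerivAt_affine_rpow s (f s ^ p) A hp hApos.ne'
  have hc : Continuous fun x => (f s ^ p + A * (x - s)) ^ (1 / p + 1) / (A * (1 / p + 1)) :=
    continuous_iff_continuousAt.2 fun x => (hd x).continuousAt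
  have hroot : ∀ x, 0 < f x → (f x ^ p) ^ (1 / p) = f x := fun x hx => by
    rw [one_div, Real.rpow_rpow_inv hx.le hp.ne']
  have hpow : ∀ x, 0 < f x → (f x ^ p) ^ (1 / p + 1) = f x ^ (p + 1) := fun x hx => by
    rw [← Real.rpow_mul hx.le]; congr 1; field_simp; ring
  have hI1 := integral_le_sub_of_hasDeriv_right_of_le hs.1.le hc.continuousOn
    (fun x _ => (hd x).hasDerivWithinAt) (hi α s hα hs') (fun x hx => by
      have hx' := h.pos x ⟨hx.1, hx.2.trans hs.2⟩
      rw [← hroot x hx']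
      exact Real.rpow_le_rpow (Real.rpow_nonneg hx'.le p) (hleft x hx) hp'.le)
  have hI2 := sub_le_integral_of_hasDeriv_right_of_le hst.le hc.continuousOn
    (fun x _ => (hd x).hasDerivWithinAt) (hi s t hs' ht') (fun x hx => by
      have hx' := h.pos x ⟨hs.1.trans hx.1, hx.2.trans ht.2⟩
      have : 0 ≤ f s ^ p + A * (x - s) :=
        add_nonneg (Real.rpow_nonneg hfs.le p) (mul_nonneg hApos.le (sub_pos.2 hx.1).le)
      rw [← hroot x hx']
      exact Real.rpow_le_rpow this (hright x hx) hp'.le)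
  have e1 : f s ^ p + A * (s - s) = f s ^ p := by ring
  have e2 : f s ^ p + A * (t - s) = f t ^ p := by rw [hAts]; ring
  simp only [e1, e2, hpow s hfs, hpow t hft] at hI1 hI2
  have hB : 0 < A * (1 / p + 1) := by positivity
  have hI1' : (∫ x in α..s, f x) * (A * (1 / p + 1)) ≤ f s ^ (p + 1) := by
    rw [← le_div_iff₀ hB]
    have : 0 ≤ (f s ^ p + A * (α - s)) ^ (1 / p + 1) / (A * (1 / p + 1)) :=
      div_nonneg (Real.rpow_nonneg hlα _) hB.le
    linarith
  have hI2' : f t ^ (p + 1) - f s ^ (p + 1) ≤ (∫ x in s..t, f x) * (A * (1 / p + 1)) := by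
    rw [← div_le_iff₀ hB, sub_div]
    exact hI2
  have h3 := mul_le_mul_of_nonneg_left hI2' hFs
  have h4 := mul_le_mul_of_nonneg_left hI1' hFst
  rw [← hadd]
  linarith

/-- The quotient `f ^ (p + 1) / ∫_t^β f` is nondecreasing in `t`. -/
theorem rpow_mul_integral_right_le (h : PosPowConcaveOn p α β f) (hp : 0 < p) {s t : ℝ}
    (hs : s ∈ Ioo α β) (ht : t ∈ Ioo α β) (hst : s ≤ t) :
    f s ^ (p + 1) * ∫ x in t..β, f x ≤ f t ^ (p + 1) * ∫ x in s..β, f x := by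
  have h1 := h.comp_neg.rpow_mul_integral_left_le hp (s := -t) (t := -s)
    ⟨by linarith [ht.2], by linarith [ht.1]⟩ ⟨by linarith [hs.2], by linarith [hs.1]⟩
    (neg_le_neg hst)
  simpa [integral_comp_neg] using h1

theorem intervalIntegrable (h : PosPowConcaveOn p α β f) (hp : 0 < p) {u v : ℝ}
    (hu : u ∈ Icc α β) (hv : v ∈ Icc α β) : IntervalIntegrable f volume u v :=
  ((h.integrableOn hp).mono_set (uIcc_subset_Icc hu hv)).intervalIntegrable

theorem integral_left_pos (h : PosPowConcaveOn p α β f) (hp : 0 < p) {t : ℝ}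
    (ht : t ∈ Ioc α β) : 0 < ∫ x in α..t, f x :=
  intervalIntegral_pos_of_pos_on
    (h.intervalIntegrable hp (left_mem_Icc.2 h.lt.le) (Ioc_subset_Icc_self ht))
    (fun x hx => h.pos x ⟨hx.1, hx.2.trans_le ht.2⟩) ht.1

theorem integral_right_pos (h : PosPowConcaveOn p α β f) (hp : 0 < p) {t : ℝ}
    (ht : t ∈ Ico α β) : 0 < ∫ x in t..β, f x :=
  intervalIntegral_pos_of_pos_on
    (h.intervalIntegrable hp (Ico_subset_Icc_self ht) (right_mem_Icc.2 h.lt.le))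
    (fun x hx => h.pos x ⟨ht.1.trans_lt hx.1, hx.2⟩) ht.2

theorem continuousOn_integral (h : PosPowConcaveOn p α β f) (hp : 0 < p) :
    ContinuousOn (fun t => ∫ x in α..t, f x) (Icc α β) := by
  have h1 := h.integrableOn hp
  rw [← uIcc_of_le h.lt.le] at h1 ⊢
  exact continuousOn_primitive_interval h1

theorem hasDerivAt_integral (h : PosPowConcaveOn p α β f) (hp : 0 < p) {t : ℝ}
    (ht : t ∈ Ioo α β) : HasDerivAt (fun t => ∫ x in α..t, f x) (f t) t :=
  integral_hasDerivAt_right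
    (h.intervalIntegrable hp (left_mem_Icc.2 h.lt.le) (Ioo_subset_Icc_self ht))
    ((h.continuousOn hp).stronglyMeasurableAtFilter isOpen_Ioo t ht)
    ((h.continuousOn hp).continuousAt (isOpen_Ioo.mem_nhds ht))

theorem hasDerivAt_integral_rpow (h : PosPowConcaveOn p α β f) (hp : 0 < p) (q : ℝ) {t : ℝ}
    (ht : t ∈ Ioo α β) :
    HasDerivAt (fun t => (∫ x in α..t, f x) ^ q)
      (f t * q * (∫ x in α..t, f x) ^ (q - 1)) t :=
  (h.hasDerivAt_integral hp ht).rpow_const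
    (Or.inl (h.integral_left_pos hp (Ioo_subset_Ioc_self ht)).ne')

/-- The primitive of a `p`-concave function is `p / (p + 1)`-concave. -/
theorem concaveOn_integral_rpow (h : PosPowConcaveOn p α β f) (hp : 0 < p) :
    ConcaveOn ℝ (Icc α β) (fun t => (∫ x in α..t, f x) ^ (p / (p + 1))) := by
  have hq : 0 < p / (p + 1) := by positivity
  refine AntitoneOn.concaveOn_of_deriv (convex_Icc _ _)
    ((h.continuousOn_integral hp).rpow_const fun x _ => Or.inr hq.le) ?_ ?_
  · rw [interior_Icc]
    exact fun t ht =>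
      (h.hasDerivAt_integral_rpow hp _ ht).differentiableAt.differentiableWithinAt
  · rw [interior_Icc]
    intro s hs t ht hst
    rw [(h.hasDerivAt_integral_rpow hp _ hs).deriv, (h.hasDerivAt_integral_rpow hp _ ht).deriv]
    have hFs := h.integral_left_pos hp (Ioo_subset_Ioc_self hs)
    have hFt := h.integral_left_pos hp (Ioo_subset_Ioc_self ht)
    have hfs := (h.pos s hs).le
    have hft := (h.pos t ht).le
    have h1 := Real.rpow_le_rpow (mul_nonneg (Real.rpow_nonneg hft _) hFs.le)
      (h.rpow_mul_integral_left_le hp hs ht hst) (by positivity : 0 ≤ (p + 1)⁻¹)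
    have hp1 : p + 1 ≠ 0 := by positivity
    rw [Real.mul_rpow (Real.rpow_nonneg hft _) hFs.le,
      Real.mul_rpow (Real.rpow_nonneg hfs _) hFt.le, Real.rpow_rpow_inv hft hp1,
      Real.rpow_rpow_inv hfs hp1] at h1
    have he : p / (p + 1) - 1 = -(p + 1)⁻¹ := by field_simp; ring
    rw [he, Real.rpow_neg hFs.le, Real.rpow_neg hFt.le]
    have hFs' := Real.rpow_pos_of_pos hFs (p + 1)⁻¹
    have hFt' := Real.rpow_pos_of_pos hFt (p + 1)⁻¹
    have h2 : f t * ((∫ x in α..t, f x) ^ (p + 1)⁻¹)⁻¹ ≤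
        f s * ((∫ x in α..s, f x) ^ (p + 1)⁻¹)⁻¹ := by
      rwa [← div_eq_mul_inv, ← div_eq_mul_inv, div_le_div_iff₀ hFt' hFs']
    have h3 := mul_le_mul_of_nonneg_left h2 hq.le
    linarith

theorem exists_integral_rpow_le (h : PosPowConcaveOn p α β f) (hp : 0 < p) {x₀ : ℝ}
    (hx₀ : x₀ ∈ Ioo α β) : ∃ σ : ℝ, ∀ t ∈ Icc α β,
      (∫ x in α..t, f x) ^ (p / (p + 1)) ≤
        (∫ x in α..x₀, f x) ^ (p / (p + 1)) + σ * (t - x₀) := by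
  have hd := h.hasDerivAt_integral_rpow hp (p / (p + 1)) hx₀
  refine ⟨f x₀ * (p / (p + 1)) * (∫ x in α..x₀, f x) ^ (p / (p + 1) - 1), fun t ht => ?_⟩
  have hc := h.concaveOn_integral_rpow hp
  have hx₀' := Ioo_subset_Icc_self hx₀
  rcases lt_trichotomy t x₀ with hlt | rfl | hlt
  · have h1 := hc.le_slope_of_hasDerivAt ht hx₀' hlt hd
    rw [slope_def_field, le_div_iff₀ (sub_pos.2 hlt)] at h1
    linarith
  · simp
  · have h1 := hc.slope_le_of_hasDerivAt hx₀' ht hlt hd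
    rw [slope_def_field, div_le_iff₀ (sub_pos.2 hlt)] at h1
    linarith

theorem hasDerivAt_rpow_sub_mul_one_sub_rpow (s m : ℝ) {u : ℝ} (h0 : 0 < u) (h1 : u < 1) :
    HasDerivAt (fun u : ℝ => (u ^ (s + 1) - u) * (1 - u) ^ m)
      (((s + 1) * u ^ s - 1) * (1 - u) ^ m - (u ^ (s + 1) - u) * (m * (1 - u) ^ (m - 1))) u := by
  have hu : 0 < 1 - u := by linarith
  have d1 := ((Real.hasDerivAt_rpow_const (x := u) (p := s + 1) (Or.inl h0.ne')).sub
    (hasDerivAt_id u))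
  have d2 := ((hasDerivAt_id u).const_sub 1).rpow_const (p := m) (Or.inl hu.ne')
  refine (d1.mul d2).congr_deriv ?_
  simp only [add_sub_cancel_right, id_eq, Pi.sub_apply]
  ring

theorem deriv_rpow_sub_mul_one_sub_rpow_le {s m u : ℝ} (hs1 : s ≤ 1) (hm : 0 ≤ m)
    (h0 : 0 < u) (h1 : u < 1) :
    ((s + 1) * u ^ s - 1) * (1 - u) ^ m - (u ^ (s + 1) - u) * (m * (1 - u) ^ (m - 1)) ≤
      ((s + 1 + m) * u ^ s - 1) * (1 - u) ^ m := by
  have hu : 0 < 1 - u := by linarith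
  have e1 : (1 - u) ^ m = (1 - u) ^ (m - 1) * (1 - u) := by
    rw [← Real.rpow_add_one hu.ne', sub_add_cancel]
  have e2 : u ^ (s + 1) = u ^ s * u := Real.rpow_add_one h0.ne' s
  have h3 : u ≤ u ^ s := by
    simpa using Real.rpow_le_rpow_of_exponent_ge h0 h1.le hs1
  have h4 : 0 ≤ m * (1 - u) ^ (m - 1) * (u ^ s - u) :=
    mul_nonneg (mul_nonneg hm (Real.rpow_nonneg hu.le _)) (sub_nonneg.2 h3)
  rw [e1, e2]
  linarith

/-- A lower bound for the mean of `F ^ (p / (p + 1))` with respect to the density `f ^ r`, where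
`F` is the normalized primitive of `f`. -/
theorem integral_sub_mul_rpow_nonneg (h : PosPowConcaveOn p α β f) (hp : 0 < p) {r : ℝ}
    (hr : 1 ≤ r) :
    0 ≤ ∫ t in α..β, (((∫ x in α..t, f x) / ∫ x in α..β, f x) ^ (p / (p + 1)) -
      (p + 1) / (2 * p + r)) * f t ^ r := by
  set J := ∫ x in α..β, f x with hJ
  set U : ℝ → ℝ := fun t => (∫ x in α..t, f x) / J with hU
  set s := p / (p + 1) with hs
  set m := (r - 1) / (p + 1) with hm
  set c := (p + 1) / (2 * p + r) with hc
  have hs0 : 0 < s := by positivity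
  have hs1 : s ≤ 1 := by rw [hs, div_le_one (by positivity)]; linarith
  have hm0 : 0 ≤ m := div_nonneg (by linarith) (by positivity)
  have hc0 : 0 < c := div_pos (by positivity) (by linarith)
  have hc1 : c < 1 := by rw [hc, div_lt_one (by linarith)]; linarith
  have hcs : c * (s + 1 + m) = 1 := by
    have : 2 * p + r ≠ 0 := by linarith
    rw [hc, hs, hm]; field_simp; ring
  have hJ0 : 0 < J := h.integral_left_pos hp (right_mem_Ioc.2 h.lt)
  have hUc : ContinuousOn U (Icc α β) := (h.continuousOn_integral hp).div_const J
  have hUα : U α = 0 := by simp [hU]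
  have hUβ : U β = 1 := by simp only [hU]; exact div_self hJ0.ne'
  have hcompl : ∀ t ∈ Icc α β, ∫ x in t..β, f x = J * (1 - U t) := fun t ht => by
    have h1 := integral_add_adjacent_intervals
      (h.intervalIntegrable hp (left_mem_Icc.2 h.lt.le) ht)
      (h.intervalIntegrable hp ht (right_mem_Icc.2 h.lt.le))
    have h2 : J * U t = ∫ x in α..t, f x := by simp only [hU]; field_simp
    rw [mul_sub, h2, mul_one, hJ, ← h1]; ring
  have hU0 : ∀ t ∈ Ioo α β, 0 < U t := fun t ht =>
    div_pos (h.integral_left_pos hp (Ioo_subset_Ioc_self ht)) hJ0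
  have hU1 : ∀ t ∈ Ioo α β, 0 < 1 - U t := fun t ht => by
    have h1 := h.integral_right_pos hp (Ioo_subset_Ico_self ht)
    rw [hcompl t (Ioo_subset_Icc_self ht)] at h1
    exact pos_of_mul_pos_right h1 hJ0.le
  have hUd : ∀ t ∈ Ioo α β, HasDerivAt U (f t / J) t := fun t ht =>
    (h.hasDerivAt_integral hp ht).div_const J
  have hquot : ∀ x ∈ Ioo α β, ∀ y ∈ Ioo α β, x ≤ y →
      f x ^ (p + 1) / (1 - U x) ≤ f y ^ (p + 1) / (1 - U y) := fun x hx y hy hxy => by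
    have h1 := h.rpow_mul_integral_right_le hp hx hy hxy
    rw [hcompl x (Ioo_subset_Icc_self hx), hcompl y (Ioo_subset_Icc_self hy)] at h1
    rw [div_le_div_iff₀ (hU1 x hx) (hU1 y hy)]
    refine le_of_mul_le_mul_left ?_ hJ0
    linarith
  have hUmono : ∀ x ∈ Ioo α β, ∀ y ∈ Ioo α β, x ≤ y → U x ≤ U y := fun x hx y hy hxy => by
    have h1 := integral_add_adjacent_intervals
      (h.intervalIntegrable hp (left_mem_Icc.2 h.lt.le) (Ioo_subset_Icc_self hx))
      (h.intervalIntegrable hp (Ioo_subset_Icc_self hx) (Ioo_subset_Icc_self hy))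
    have h2 : 0 ≤ ∫ z in x..y, f z := integral_nonneg hxy fun z hz =>
      (h.pos z ⟨hx.1.trans_le hz.1, hz.2.trans_lt hy.2⟩).le
    exact div_le_div_of_nonneg_right (by linarith) hJ0.le
  obtain ⟨t₀, ht₀, hUt₀⟩ : c ^ s⁻¹ ∈ U '' Ioo α β := by
    refine intermediate_value_Ioo h.lt.le hUc ?_
    rw [hUα, hUβ]
    exact ⟨by positivity, Real.rpow_lt_one hc0.le hc1 (by positivity)⟩
  have hct₀ : U t₀ ^ s = c := by rw [hUt₀, Real.rpow_inv_rpow hc0.le hs0.ne']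
  set ρ : ℝ → ℝ := fun t => f t ^ (p + 1) / (1 - U t) with hρ
  have hρ0 : ∀ t ∈ Ioo α β, 0 ≤ ρ t := fun t ht =>
    div_nonneg (Real.rpow_nonneg (h.pos t ht).le _) (hU1 t ht).le
  have hfr : ∀ t ∈ Ioo α β, f t ^ r = ρ t ^ m * (f t * (1 - U t) ^ m) := fun t ht => by
    have hf := h.pos t ht
    have h1 : ρ t ^ m * (1 - U t) ^ m = f t ^ (r - 1) := by
      rw [← Real.mul_rpow (hρ0 t ht) (hU1 t ht).le]
      simp only [hρ]
      rw [div_mul_cancel₀ _ (hU1 t ht).ne', ← Real.rpow_mul hf.le]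
      congr 1
      rw [hm]; field_simp
    calc f t ^ r = f t ^ (r - 1) * f t := by rw [← Real.rpow_add_one hf.ne', sub_add_cancel]
      _ = _ := by rw [← h1]; ring
  have hkey : ∀ t ∈ Ioo α β,
      (U t ^ s - c) * ρ t₀ ^ m ≤ (U t ^ s - c) * ρ t ^ m := fun t ht => by
    rcases le_total t₀ t with hle | hle
    · have h1 := Real.rpow_le_rpow (hρ0 t₀ ht₀) (hquot t₀ ht₀ t ht hle) hm0
      have h2 := Real.rpow_le_rpow (hU0 t₀ ht₀).le (hUmono t₀ ht₀ t ht hle) hs0.le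
      rw [hct₀] at h2
      exact mul_le_mul_of_nonneg_left h1 (sub_nonneg.2 h2)
    · have h1 := Real.rpow_le_rpow (hρ0 t ht) (hquot t ht t₀ ht₀ hle) hm0
      have h2 := Real.rpow_le_rpow (hU0 t ht).le (hUmono t ht t₀ ht₀ hle) hs0.le
      rw [hct₀] at h2
      exact mul_le_mul_of_nonpos_left h1 (sub_nonpos.2 h2)
  have hQc : ContinuousOn
      (fun t => ρ t₀ ^ m * c * J * ((U t ^ (s + 1) - U t) * (1 - U t) ^ m)) (Icc α β) :=
    continuousOn_const.mul (((hUc.rpow_const fun _ _ => Or.inr (by linarith)).sub hUc).mul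
      ((continuousOn_const.sub hUc).rpow_const fun _ _ => Or.inr hm0))
  have hint : IntegrableOn (fun t => (U t ^ s - c) * f t ^ r) (Icc α β) :=
    (h.integrableOn_rpow hp (by linarith : 0 ≤ r)).continuousOn_mul
      ((hUc.rpow_const fun _ _ => Or.inr hs0.le).sub continuousOn_const) isCompact_Icc
  have hmain := sub_le_integral_of_hasDeriv_right_of_le h.lt.le hQc
    (fun t ht => (((hasDerivAt_rpow_sub_mul_one_sub_rpow s m (hU0 t ht)
      (by linarith [hU1 t ht])).comp t (hUd t ht)).const_mul (ρ t₀ ^ m * c * J)).hasDerivWithinAt)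
    hint (fun t ht => by
      have hf := h.pos t ht
      have h1 := deriv_rpow_sub_mul_one_sub_rpow_le hs1 hm0 (hU0 t ht)
        (by linarith [hU1 t ht] : U t < 1)
      have hρm := Real.rpow_nonneg (hρ0 t₀ ht₀) m
      have h2 := mul_le_mul_of_nonneg_left h1
        (mul_nonneg (mul_nonneg hρm hc0.le) hf.le : 0 ≤ ρ t₀ ^ m * c * f t)
      have h3 := mul_le_mul_of_nonneg_right (hkey t ht)
        (mul_nonneg hf.le (Real.rpow_nonneg (hU1 t ht).le m))
      have e1 : ∀ D, ρ t₀ ^ m * c * J * (D * (f t / J)) = ρ t₀ ^ m * c * f t * D := fun D => by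
        field_simp
      have e2 : ρ t₀ ^ m * c * f t * (((s + 1 + m) * U t ^ s - 1) * (1 - U t) ^ m) =
          (U t ^ s - c) * ρ t₀ ^ m * (f t * (1 - U t) ^ m) := by
        linear_combination (ρ t₀ ^ m * f t * (1 - U t) ^ m * U t ^ s) * hcs
      rw [e1, hfr t ht]
      linarith)
  have hs10 : s + 1 ≠ 0 := by linarith
  simpa [hUα, hUβ, Real.zero_rpow hs10] using hmain

theorem rpow_mul_integral_le (h : PosPowConcaveOn p α β f) (hp : 0 < p) {r : ℝ}
    (hr : 1 ≤ r) (h0 : 0 ∈ Ioo α β) (hcent : ∫ t in α..β, t * f t ^ r = 0) :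
    ((p + 1) / (2 * p + r)) ^ ((p + 1) / p) ≤
      (∫ x in α..0, f x) / ∫ x in α..β, f x := by
  have hJ0 : 0 < ∫ x in α..β, f x := h.integral_left_pos hp (right_mem_Ioc.2 h.lt)
  have hF0 := h.integral_left_pos hp (Ioo_subset_Ioc_self h0)
  obtain ⟨σ, hσ⟩ := h.exists_integral_rpow_le hp h0
  have hmean := h.integral_sub_mul_rpow_nonneg hp hr
  set J := ∫ x in α..β, f x
  set s := p / (p + 1) with hs
  set c := (p + 1) / (2 * p + r) with hc
  have hs0 : 0 < s := by positivity
  have hc0 : 0 < c := div_pos (by positivity) (by linarith)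
  have hfr := h.integrableOn_rpow hp (by linarith : 0 ≤ r)
  have hfri : IntervalIntegrable (fun t => f t ^ r) volume α β :=
    (intervalIntegrable_iff_integrableOn_Icc_of_le h.lt.le).2 hfr
  have htfr : IntervalIntegrable (fun t => t * f t ^ r) volume α β :=
    hfri.continuousOn_mul continuousOn_id
  have hU : IntegrableOn
      (fun t => (((∫ x in α..t, f x) / J) ^ s - c) * f t ^ r) (Icc α β) :=
    hfr.continuousOn_mul ((((h.continuousOn_integral hp).div_const J).rpow_const
      fun _ _ => Or.inr hs0.le).sub continuousOn_const) isCompact_Icc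
  have hfrpos : 0 < ∫ t in α..β, f t ^ r :=
    intervalIntegral_pos_of_pos_on hfri (fun x hx => Real.rpow_pos_of_pos (h.pos x hx) r) h.lt
  have hle := integral_mono_on_of_le_Ioo h.lt.le
    ((intervalIntegrable_iff_integrableOn_Icc_of_le h.lt.le).2 hU)
    ((hfri.const_mul (((∫ x in α..0, f x) / J) ^ s - c)).add (htfr.const_mul (σ / J ^ s)))
    (fun t ht => by
      have hFt := h.integral_left_pos hp (Ioo_subset_Ioc_self ht)
      have hJs := Real.rpow_pos_of_pos hJ0 s
      have h1 := hσ t (Ioo_subset_Icc_self ht)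
      rw [sub_zero] at h1
      have h2 := div_le_div_of_nonneg_right h1 hJs.le
      have h3 := mul_le_mul_of_nonneg_right h2 (Real.rpow_nonneg (h.pos t ht).le r)
      rw [add_div, mul_div_right_comm] at h3
      rw [Real.div_rpow hFt.le hJ0.le, Real.div_rpow hF0.le hJ0.le]
      linarith)
  rw [integral_add (hfri.const_mul _) (htfr.const_mul _), intervalIntegral.integral_const_mul,
    intervalIntegral.integral_const_mul, hcent, mul_zero, add_zero] at hle
  have hcle : c ≤ ((∫ x in α..0, f x) / J) ^ s :=
    sub_nonneg.1 (nonneg_of_mul_nonneg_left (hmean.trans hle) hfrpos)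
  have hsi : (p + 1) / p = s⁻¹ := by rw [hs, inv_div]
  rw [hsi]
  exact (Real.rpow_inv_le_iff_of_pos hc0.le (div_pos hF0 hJ0).le hs0).2 hcle

end PosPowConcaveOn

theorem intervalIntegrable_and_integral_eq_zero_of_Ioo {g : ℝ → ℝ} {a b : ℝ} (hab : a ≤ b)
    (hg : ∀ x ∈ Ioo a b, g x = 0) :
    IntervalIntegrable g volume a b ∧ ∫ x in a..b, g x = 0 := by
  have h1 : IntegrableOn g (Ioo a b) :=
    (integrableOn_congr_fun hg measurableSet_Ioo).2 integrableOn_zero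
  refine ⟨(intervalIntegrable_iff_integrableOn_Ioo_of_le hab).2 h1, ?_⟩
  rw [integral_of_le hab, integral_Ioc_eq_integral_Ioo, setIntegral_congr_fun measurableSet_Ioo hg]
  simp

theorem integral_eq_of_eq_zero_left {g : ℝ → ℝ} {a α v : ℝ} (ha : a ≤ α)
    (hg : ∀ x ∈ Ioo a α, g x = 0) (hi : IntervalIntegrable g volume α v) :
    ∫ x in a..v, g x = ∫ x in α..v, g x := by
  obtain ⟨h1, h2⟩ := intervalIntegrable_and_integral_eq_zero_of_Ioo ha hg
  rw [← integral_add_adjacent_intervals h1 hi, h2, zero_add]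

theorem integral_eq_of_eq_zero_outside {g : ℝ → ℝ} {a α β b : ℝ} (ha : a ≤ α) (hb : β ≤ b)
    (hgα : ∀ x ∈ Ioo a α, g x = 0) (hgβ : ∀ x ∈ Ioo β b, g x = 0)
    (hi : IntervalIntegrable g volume α β) :
    ∫ x in a..b, g x = ∫ x in α..β, g x := by
  obtain ⟨h1, h2⟩ := intervalIntegrable_and_integral_eq_zero_of_Ioo hb hgβ
  rw [integral_eq_of_eq_zero_left ha hgα (hi.trans h1), ← integral_add_adjacent_intervals hi h1,
    h2, add_zero]

/-- A function that is `p`-concave on its support and has positive integral is positive on a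
nonempty open interval and vanishes off its closure. -/
theorem exists_posPowConcaveOn {a b p : ℝ} {f : ℝ → ℝ} (hab : a ≤ b)
    (hnn : ∀ t ∈ Icc a b, 0 ≤ f t)
    (hconc : ConcaveOn ℝ (Icc a b ∩ {t | 0 < f t}) (fun t => f t ^ p))
    (hint : 0 < ∫ t in a..b, f t) :
    ∃ α β, a ≤ α ∧ β ≤ b ∧ PosPowConcaveOn p α β f ∧
      (∀ x ∈ Ioo a α, f x = 0) ∧ ∀ x ∈ Ioo β b, f x = 0 := by
  set S := Icc a b ∩ {t | 0 < f t} with hS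
  have hzero : ∀ x ∈ Icc a b, x ∉ S → f x = 0 := fun x hx hxS =>
    le_antisymm (not_lt.1 fun h => hxS ⟨hx, h⟩) (hnn x hx)
  have hnt : S.Nontrivial := by
    by_contra hsub
    rw [not_nontrivial_iff] at hsub
    refine hint.ne' (integral_zero_ae ?_)
    filter_upwards [hsub.countable.ae_notMem volume] with x hx hxab
    rw [uIoc_of_le hab] at hxab
    exact hzero x (Ioc_subset_Icc_self hxab) hx
  have hbb : BddBelow S := ⟨a, fun x hx => hx.1.1⟩
  have hba : BddAbove S := ⟨b, fun x hx => hx.1.2⟩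
  have hsub : Ioo (sInf S) (sSup S) ⊆ S := fun x hx => by
    obtain ⟨y, hy, hyx⟩ := exists_lt_of_csInf_lt hnt.nonempty hx.1
    obtain ⟨z, hz, hxz⟩ := exists_lt_of_lt_csSup hnt.nonempty hx.2
    exact hconc.1.ordConnected.out hy hz ⟨hyx.le, hxz.le⟩
  obtain ⟨x, hx, y, hy, hxy⟩ := hnt.exists_lt
  have haα : a ≤ sInf S := le_csInf hnt.nonempty fun x hx => hx.1.1
  have hβb : sSup S ≤ b := csSup_le hnt.nonempty fun x hx => hx.1.2
  have hαβ : sInf S < sSup S := (csInf_le hbb hx).trans_lt (hxy.trans_le (le_csSup hba hy))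
  refine ⟨sInf S, sSup S, haα, hβb,
    ⟨hαβ, fun x hx => (hsub hx).2, hconc.subset hsub (convex_Ioo _ _)⟩, fun x hx => ?_,
    fun x hx => ?_⟩
  · exact hzero x ⟨hx.1.le, hx.2.le.trans (hαβ.le.trans hβb)⟩
      fun hxS => (csInf_le hbb hxS).not_gt hx.2
  · exact hzero x ⟨(haα.trans hαβ.le).trans hx.1.le, hx.2.le⟩
      fun hxS => (le_csSup hba hxS).not_gt hx.1

theorem stmt_4 (a b p r : ℝ) (f : ℝ → ℝ) (ha : a < 0) (hb : 0 < b)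
    (hp : 0 < p) (hr : 1 ≤ r)
    (hnn : ∀ t ∈ Set.Icc a b, 0 ≤ f t)
    (hconc : ConcaveOn ℝ (Set.Icc a b ∩ {t | 0 < f t}) (fun t => f t ^ p))
    (hint : 0 < ∫ t in a..b, f t)
    (hcent : (∫ t in a..b, t * f t ^ r) / (∫ t in a..b, f t ^ r) = 0) :
    (∫ t in a..(0 : ℝ), f t) / (∫ t in a..b, f t) ≥
      ((p + 1) / (2 * p + r)) ^ ((p + 1) / p) := by
  obtain ⟨α, β, haα, hβb, h, hzα, hzβ⟩ :=
    exists_posPowConcaveOn (ha.trans hb).le hnn hconc hint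
  have hr0 : r ≠ 0 := by linarith
  have hfr : IntervalIntegrable (fun t => f t ^ r) volume α β :=
    (intervalIntegrable_iff_integrableOn_Icc_of_le h.lt.le).2
      (h.integrableOn_rpow hp (by linarith))
  have htfr : IntervalIntegrable (fun t => t * f t ^ r) volume α β :=
    hfr.continuousOn_mul continuousOn_id
  have hden := intervalIntegral_pos_of_pos_on hfr
    (fun x hx => Real.rpow_pos_of_pos (h.pos x hx) r) h.lt
  rw [integral_eq_of_eq_zero_outside haα hβb
      (fun x hx => by rw [hzα x hx, Real.zero_rpow hr0, mul_zero])
      (fun x hx => by rw [hzβ x hx, Real.zero_rpow hr0, mul_zero]) htfr,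
    integral_eq_of_eq_zero_outside haα hβb
      (fun x hx => by rw [hzα x hx, Real.zero_rpow hr0])
      (fun x hx => by rw [hzβ x hx, Real.zero_rpow hr0]) hfr] at hcent
  have hcent' : ∫ t in α..β, t * f t ^ r = 0 :=
    (div_eq_zero_iff.1 hcent).resolve_right hden.ne'
  have h0 : 0 ∈ Ioo α β := by
    constructor <;> by_contra! hle
    · exact (intervalIntegral_pos_of_pos_on htfr (fun x hx => mul_pos (hle.trans_lt hx.1)
        (Real.rpow_pos_of_pos (h.pos x hx) r)) h.lt).ne' hcent'
    · have h1 := intervalIntegral_pos_of_pos_on htfr.neg (fun x hx => neg_pos.2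
        (mul_neg_of_neg_of_pos (hx.2.trans_le hle) (Real.rpow_pos_of_pos (h.pos x hx) r))) h.lt
      simp only [Pi.neg_apply, intervalIntegral.integral_neg, hcent', neg_zero] at h1
      exact absurd h1 (lt_irrefl 0)
  have hα := left_mem_Icc.2 h.lt.le
  rw [integral_eq_of_eq_zero_outside haα hβb hzα hzβ
      (h.intervalIntegrable hp hα (right_mem_Icc.2 h.lt.le)),
    integral_eq_of_eq_zero_left haα hzα
      (h.intervalIntegrable hp hα (Ioo_subset_Icc_self h0))]
  exact h.rpow_mul_integral_le hp hr h0 hcent'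
end

section
/- Let r>0 and p>0, and let f:[a,b]→[0,∞) be a p-concave function with positive integral such that a<0<b and (∫_a^b t f(t)^r dt)/(∫_a^b f(t)^r dt) = 0. Then (∫_a^0 f(t) dt)/(∫_a^b f(t) dt) ≥ (p/(2p+r))^{(p+1)/p}. -/
open MeasureTheory Set Filter Topology

theorem ConcaveOn.mul_add_mul_le_mul {D : Set ℝ} {g : ℝ → ℝ} (hg : ConcaveOn ℝ D g) {x y z : ℝ}
    (hx : x ∈ D) (hz : z ∈ D) (hxy : x < y) (hyz : y < z) :
    (z - y) * g x + (y - x) * g z ≤ (z - x) * g y := by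
  have h := hg.slope_anti_adjacent hx hz hxy hyz
  rw [div_le_div_iff₀ (by linarith) (by linarith)] at h
  linarith

section ConcavePos

variable {α β s : ℝ} {g : ℝ → ℝ}

theorem ConcaveOn.mul_le_mul_sub_right (hg : ConcaveOn ℝ (Ioo α β) g)
    (hpos : ∀ t ∈ Ioo α β, 0 < g t) {t u : ℝ} (ht : t ∈ Ioo α β) (hu : u ∈ Ioo α β)
    (htu : t ≤ u) : (β - u) * g t ≤ (β - t) * g u := by
  rcases htu.eq_or_lt with rfl | htu
  · exact le_rfl
  have hl : Tendsto (fun v => (v - u) * g t) (𝓝[<] β) (𝓝 ((β - u) * g t)) :=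
    (Continuous.tendsto (by fun_prop) β).mono_left nhdsWithin_le_nhds
  have hr : Tendsto (fun v => (v - t) * g u) (𝓝[<] β) (𝓝 ((β - t) * g u)) :=
    (Continuous.tendsto (by fun_prop) β).mono_left nhdsWithin_le_nhds
  refine le_of_tendsto_of_tendsto hl hr ?_
  filter_upwards [Ioo_mem_nhdsLT hu.2] with v hv
  have hvm : v ∈ Ioo α β := ⟨hu.1.trans hv.1, hv.2⟩
  have h := hg.mul_add_mul_le_mul ht hvm htu hv.1
  have := mul_nonneg (sub_nonneg.2 htu.le) (hpos v hvm).le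
  linarith

theorem ConcaveOn.mul_le_mul_sub_left (hg : ConcaveOn ℝ (Ioo α β) g)
    (hpos : ∀ t ∈ Ioo α β, 0 < g t) {t u : ℝ} (ht : t ∈ Ioo α β) (hu : u ∈ Ioo α β)
    (htu : t ≤ u) : (t - α) * g u ≤ (u - α) * g t := by
  rcases htu.eq_or_lt with rfl | htu
  · exact le_rfl
  have hl : Tendsto (fun v => (t - v) * g u) (𝓝[>] α) (𝓝 ((t - α) * g u)) :=
    (Continuous.tendsto (by fun_prop) α).mono_left nhdsWithin_le_nhds
  have hr : Tendsto (fun v => (u - v) * g t) (𝓝[>] α) (𝓝 ((u - α) * g t)) :=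
    (Continuous.tendsto (by fun_prop) α).mono_left nhdsWithin_le_nhds
  refine le_of_tendsto_of_tendsto hl hr ?_
  filter_upwards [Ioo_mem_nhdsGT ht.1] with v hv
  have hvm : v ∈ Ioo α β := ⟨hv.1, hv.2.trans ht.2⟩
  have h := hg.mul_add_mul_le_mul hvm hu hv.2 htu
  have := mul_nonneg (sub_nonneg.2 htu.le) (hpos v hvm).le
  linarith

theorem ConcaveOn.le_two_mul_midpoint_s9 (hg : ConcaveOn ℝ (Ioo α β) g)
    (hpos : ∀ t ∈ Ioo α β, 0 < g t) {t : ℝ} (ht : t ∈ Ioo α β) :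
    g t ≤ 2 * g ((α + β) / 2) := by
  have hu : α + β - t ∈ Ioo α β := ⟨by linarith [ht.2], by linarith [ht.1]⟩
  have h := hg.2 ht hu (by norm_num : (0 : ℝ) ≤ 1 / 2) (by norm_num : (0 : ℝ) ≤ 1 / 2) (by norm_num)
  have he : (1 / 2 : ℝ) • t + (1 / 2 : ℝ) • (α + β - t) = (α + β) / 2 := by
    simp only [smul_eq_mul]; ring
  rw [he] at h
  simp only [smul_eq_mul] at h
  linarith [hpos _ hu]

theorem ConcaveOn.intervalIntegrable_rpow_s9 (hg : ConcaveOn ℝ (Ioo α β) g)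
    (hpos : ∀ t ∈ Ioo α β, 0 < g t) (hαβ : α ≤ β) (hs : 0 < s) :
    IntervalIntegrable (fun t => g t ^ s) volume α β := by
  rw [intervalIntegrable_iff_integrableOn_Ioo_of_le hαβ]
  have hc : ContinuousOn (fun t => g t ^ s) (Ioo α β) :=
    (hg.continuousOn isOpen_Ioo).rpow_const fun t ht => Or.inl (hpos t ht).ne'
  refine IntegrableOn.of_bound (by simp) (hc.aestronglyMeasurable measurableSet_Ioo)
    ((2 * g ((α + β) / 2)) ^ s) ?_
  filter_upwards [ae_restrict_mem measurableSet_Ioo] with t ht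
  rw [Real.norm_of_nonneg (Real.rpow_nonneg (hpos t ht).le _)]
  exact Real.rpow_le_rpow (hpos t ht).le (hg.le_two_mul_midpoint_s9 hpos ht) hs.le

theorem integral_sub_mul_rpow_eq_zero (hs : 0 < s) (hαβ : α < β) :
    ∫ t in α..β, (t - (α + (β - α) / (s + 2))) * (β - t) ^ s = 0 := by
  have hL : 0 < β - α := sub_pos.2 hαβ
  have h1 : ∫ t in α..β, (t - (α + (β - α) / (s + 2))) * (β - t) ^ s =
      ∫ t in α..β, ((β - α) * (s + 1) / (s + 2) * (β - t) ^ s - (β - t) ^ (s + 1)) := by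
    refine intervalIntegral.integral_congr fun t ht => ?_
    rw [uIcc_of_le hαβ.le] at ht
    have : (β - t) ^ (s + 1) = (β - t) ^ s * (β - t) := by
      rw [Real.rpow_add' (by linarith [ht.2]) (by linarith), Real.rpow_one]
    simp only [this]
    field_simp
    ring
  rw [h1, intervalIntegral.integral_comp_sub_left
    (fun x => (β - α) * (s + 1) / (s + 2) * x ^ s - x ^ (s + 1)), sub_self,
    intervalIntegral.integral_sub
      ((intervalIntegral.intervalIntegrable_rpow' (by linarith)).const_mul _)
      (intervalIntegral.intervalIntegrable_rpow' (by linarith)),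
    intervalIntegral.integral_const_mul, integral_rpow (Or.inl (by linarith)),
    integral_rpow (Or.inl (by linarith)), Real.zero_rpow (by linarith),
    Real.zero_rpow (by linarith), Real.rpow_add hL (s + 1), Real.rpow_one]
  field_simp
  ring

theorem ConcaveOn.integral_sub_mul_rpow_nonneg (hg : ConcaveOn ℝ (Ioo α β) g)
    (hpos : ∀ t ∈ Ioo α β, 0 < g t) (hαβ : α < β) (hs : 0 < s) :
    0 ≤ ∫ t in α..β, (t - (α + (β - α) / (s + 2))) * g t ^ s := by
  have hL : 0 < β - α := sub_pos.2 hαβ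
  set c := α + (β - α) / (s + 2) with hc
  have hcm : c ∈ Ioo α β := by
    have h0 : 0 < (β - α) / (s + 2) := by positivity
    have h1 : (β - α) / (s + 2) < β - α := div_lt_self hL (by linarith)
    exact ⟨by linarith, by linarith⟩
  have hcβ : 0 < β - c := sub_pos.2 hcm.2
  have hz : ∫ t in α..β, (g c / (β - c)) ^ s * ((t - c) * (β - t) ^ s) = 0 := by
    rw [intervalIntegral.integral_const_mul, hc, integral_sub_mul_rpow_eq_zero hs hαβ, mul_zero]
  rw [← hz]
  refine intervalIntegral.integral_mono_on_of_le_Ioo hαβ.le ?_ ?_ fun t ht => ?_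
  · refine Continuous.intervalIntegrable (continuous_const.mul ((by fun_prop : Continuous
      fun t : ℝ => t - c).mul ((by fun_prop : Continuous fun t : ℝ => β - t).rpow_const
        fun _ => Or.inr hs.le))) _ _
  · exact (hg.intervalIntegrable_rpow_s9 hpos hαβ.le hs).continuousOn_mul (by fun_prop)
  · have htβ : 0 < β - t := sub_pos.2 ht.2
    have hgc := hpos c hcm
    have hgt := hpos t ht
    rw [mul_left_comm, ← Real.mul_rpow (by positivity) htβ.le]
    rcases le_total t c with h | h
    · refine mul_le_mul_of_nonpos_left (Real.rpow_le_rpow hgt.le ?_ hs.le) (by linarith)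
      rw [div_mul_eq_mul_div, le_div_iff₀ hcβ]
      linarith [hg.mul_le_mul_sub_right hpos ht hcm h]
    · refine mul_le_mul_of_nonneg_left (Real.rpow_le_rpow (by positivity) ?_ hs.le) (by linarith)
      rw [div_mul_eq_mul_div, div_le_iff₀ hcβ]
      linarith [hg.mul_le_mul_sub_right hpos hcm ht h]

theorem ConcaveOn.rpow_mul_integral_le (hg : ConcaveOn ℝ (Ioo α β) g)
    (hpos : ∀ t ∈ Ioo α β, 0 < g t) (hαβ : α < β) (hs : 0 < s) {k : ℝ} (hk : 0 < k)
    (hk1 : k ≤ 1) :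
    k ^ (s + 1) * ∫ t in α..β, g t ^ s ≤ ∫ t in α..(α + k * (β - α)), g t ^ s := by
  have hL : 0 < β - α := sub_pos.2 hαβ
  have hI := hg.intervalIntegrable_rpow_s9 hpos hαβ.le hs
  have hsub : k * ∫ t in α..β, g (k * t + (α - k * α)) ^ s =
      ∫ t in α..(α + k * (β - α)), g t ^ s := by
    have h := intervalIntegral.mul_integral_comp_mul_add (a := α) (b := β)
      (f := fun t => g t ^ s) k (α - k * α)
    rw [h]
    congr 1 <;> ring
  have hle : k * (β - α) ≤ β - α := by nlinarith
  have hI' : IntervalIntegrable (fun t => g (k * t + (α - k * α)) ^ s) volume α β := by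
    have h : IntervalIntegrable (fun t => g t ^ s) volume α (α + k * (β - α)) := by
      refine hI.mono_set ?_
      rw [uIcc_of_le hαβ.le, uIcc_of_le (by nlinarith)]
      exact Icc_subset_Icc_right (by linarith)
    have h2 := (h.comp_add_right (α - k * α)).comp_mul_left (c := k)
    have e1 : (α - (α - k * α)) / k = α := by field_simp; ring
    have e2 : (α + k * (β - α) - (α - k * α)) / k = β := by field_simp; ring
    rwa [e1, e2] at h2
  rw [← hsub, Real.rpow_add hk, Real.rpow_one, mul_comm (k ^ s), mul_assoc,
    ← intervalIntegral.integral_const_mul]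
  refine mul_le_mul_of_nonneg_left ?_ hk.le
  refine intervalIntegral.integral_mono_on_of_le_Ioo hαβ.le (hI.const_mul _) hI' fun t ht => ?_
  have htα : 0 < t - α := sub_pos.2 ht.1
  have hkt : k * t + (α - k * α) ≤ t := by nlinarith
  have hm : k * t + (α - k * α) ∈ Ioo α β := ⟨by nlinarith, hkt.trans_lt ht.2⟩
  rw [← Real.mul_rpow hk.le (hpos t ht).le]
  refine Real.rpow_le_rpow (mul_nonneg hk.le (hpos t ht).le) ?_ hs.le
  have h := hg.mul_le_mul_sub_left hpos hm ht hkt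
  refine le_of_mul_le_mul_left ?_ htα
  linarith

end ConcavePos

/-- The bound for a function with `p`-concave restriction to an open interval, with the centroid
of `f ^ r` at the origin. -/
theorem rpow_mul_integral_le_of_centroid_eq_zero {α β p r : ℝ} {f : ℝ → ℝ} (hαβ : α < β)
    (hp : 0 < p) (hr : 0 < r) (hpos : ∀ t ∈ Ioo α β, 0 < f t)
    (hconc : ConcaveOn ℝ (Ioo α β) fun t => f t ^ p)
    (hcent : (∫ t in α..β, t * f t ^ r) / (∫ t in α..β, f t ^ r) = 0) :
    ∃ c ∈ Ioo α β, c ≤ 0 ∧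
      (p / (2 * p + r)) ^ ((p + 1) / p) * ∫ t in α..β, f t ≤ ∫ t in α..c, f t := by
  have hgpos : ∀ t ∈ Ioo α β, 0 < f t ^ p := fun t ht => Real.rpow_pos_of_pos (hpos t ht) p
  have hL : 0 < β - α := sub_pos.2 hαβ
  have hpow : ∀ q : ℝ, ∀ t ∈ Ioo α β, (f t ^ p) ^ (q / p) = f t ^ q := fun q t ht => by
    rw [← Real.rpow_mul (hpos t ht).le, mul_div_cancel₀ _ hp.ne']
  have hrp : 0 < r / p := by positivity
  have hI : IntervalIntegrable (fun t => f t ^ r) volume α β := by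
    have h := hconc.intervalIntegrable_rpow_s9 hgpos hαβ.le hrp
    rw [intervalIntegrable_iff_integrableOn_Ioo_of_le hαβ.le] at h ⊢
    exact h.congr_fun (fun t ht => hpow r t ht) measurableSet_Ioo
  have hIpos : 0 < ∫ t in α..β, f t ^ r :=
    intervalIntegral.intervalIntegral_pos_of_pos_on hI
      (fun t ht => Real.rpow_pos_of_pos (hpos t ht) r) hαβ
  have hzero : ∫ t in α..β, t * f t ^ r = 0 := by
    rcases div_eq_zero_iff.1 hcent with h | h
    · exact h
    · exact absurd h hIpos.ne'
  set k := p / (2 * p + r) with hk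
  have hk0 : 0 < k := by positivity
  have hk1 : k < 1 := by rw [hk, div_lt_one (by positivity)]; linarith
  have hkL : k * (β - α) < β - α := by nlinarith
  have hkL0 : 0 < k * (β - α) := by positivity
  have hc : α + (β - α) / (r / p + 2) = α + k * (β - α) := by
    rw [hk]; field_simp; ring
  refine ⟨α + k * (β - α), ⟨by linarith, by linarith⟩, ?_, ?_⟩
  · have h := hconc.integral_sub_mul_rpow_nonneg hgpos hαβ hrp
    rw [hc] at h
    have h2 : ∫ t in α..β, (t - (α + k * (β - α))) * (f t ^ p) ^ (r / p) =
        ∫ t in α..β, (t * f t ^ r - (α + k * (β - α)) * f t ^ r) := by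
      simp only [intervalIntegral.integral_of_le hαβ.le, integral_Ioc_eq_integral_Ioo]
      refine setIntegral_congr_fun measurableSet_Ioo fun t ht => ?_
      simp only [hpow r t ht, sub_mul]
    rw [h2, intervalIntegral.integral_sub (hI.continuousOn_mul (by fun_prop)) (hI.const_mul _),
      hzero, intervalIntegral.integral_const_mul, zero_sub] at h
    by_contra! hcon
    have := mul_pos hcon hIpos
    linarith
  · have h := hconc.rpow_mul_integral_le hgpos hαβ (one_div_pos.2 hp) hk0 hk1.le
    have he : (p + 1) / p = 1 / p + 1 := by field_simp; ring
    have hcongr : ∀ c, α ≤ c → c ≤ β →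
        ∫ t in α..c, (f t ^ p) ^ (1 / p) = ∫ t in α..c, f t := fun c h1 h2 => by
      simp only [intervalIntegral.integral_of_le h1, integral_Ioc_eq_integral_Ioo]
      refine setIntegral_congr_fun measurableSet_Ioo fun t ht => ?_
      simp only [hpow 1 t ⟨ht.1, ht.2.trans_le h2⟩, Real.rpow_one]
    rwa [hcongr β hαβ.le le_rfl, hcongr _ (by linarith) (by linarith), ← he] at h

theorem Convex.Ioo_sInf_sSup_subset {S : Set ℝ} (hS : Convex ℝ S) (hne : S.Nonempty) :
    Ioo (sInf S) (sSup S) ⊆ S := fun t ht => by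
  obtain ⟨x, hx, hxt⟩ := exists_lt_of_csInf_lt hne ht.1
  obtain ⟨y, hy, hty⟩ := exists_lt_of_lt_csSup hne ht.2
  exact hS.ordConnected.out hx hy ⟨hxt.le, hty.le⟩

theorem stmt_9 (a b p r : ℝ) (f : ℝ → ℝ) (ha : a < 0) (hb : 0 < b)
    (hp : 0 < p) (hr : 0 < r)
    (hnn : ∀ t ∈ Set.Icc a b, 0 ≤ f t)
    (hconc : ConcaveOn ℝ (Set.Icc a b ∩ {t | 0 < f t}) (fun t => f t ^ p))
    (hint : 0 < ∫ t in a..b, f t)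
    (hcent : (∫ t in a..b, t * f t ^ r) / (∫ t in a..b, f t ^ r) = 0) :
    (∫ t in a..(0 : ℝ), f t) / (∫ t in a..b, f t) ≥
      (p / (2 * p + r)) ^ ((p + 1) / p) := by
  have hab : a ≤ b := by linarith
  set S := Icc a b ∩ {t | 0 < f t} with hS
  have hfz : ∀ t ∈ Icc a b, t ∉ S → f t = 0 := fun t ht hn =>
    le_antisymm (not_lt.1 fun h => hn ⟨ht, h⟩) (hnn t ht)
  have hne : S.Nonempty := by
    by_contra h
    rw [not_nonempty_iff_eq_empty] at h
    refine hint.ne' (intervalIntegral.integral_zero_ae (ae_of_all _ fun t ht => ?_))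
    rw [uIoc_of_le hab] at ht
    exact hfz t (Ioc_subset_Icc_self ht) (by simp [h])
  have hbb : BddBelow S := ⟨a, fun t ht => ht.1.1⟩
  have hba : BddAbove S := ⟨b, fun t ht => ht.1.2⟩
  set α := sInf S
  set β := sSup S
  have haα : a ≤ α := le_csInf hne fun t ht => ht.1.1
  have hβb : β ≤ b := csSup_le hne fun t ht => ht.1.2
  have hle : α ≤ β := csInf_le_csSup hne hbb hba
  have hIoo : Ioo α β ⊆ S := hconc.1.Ioo_sInf_sSup_subset hne
  have hres : ∀ F : ℝ → ℝ, (∀ t, f t = 0 → F t = 0) →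
      ∫ t in a..b, F t = ∫ t in α..β, F t := fun F hF => by
    rw [intervalIntegral.integral_of_le hab, intervalIntegral.integral_of_le hle,
      ← integral_Icc_eq_integral_Ioc, ← integral_Icc_eq_integral_Ioc]
    refine setIntegral_eq_of_subset_of_forall_sdiff_eq_zero measurableSet_Icc
      (Icc_subset_Icc haα hβb) fun t ht => hF t (hfz t ht.1 fun h => ht.2 ?_)
    exact ⟨csInf_le hbb h, le_csSup hba h⟩
  have hf := hres f fun t h => h
  have hαβ : α < β := hle.lt_of_ne fun h => by
    rw [hf, h, intervalIntegral.integral_same] at hint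
    exact hint.false
  rw [hres _ fun t h => by rw [h, Real.zero_rpow hr.ne', mul_zero],
    hres _ fun t h => by rw [h, Real.zero_rpow hr.ne']] at hcent
  obtain ⟨c, hc, hc0, hbound⟩ := rpow_mul_integral_le_of_centroid_eq_zero hαβ hp hr
    (fun t ht => (hIoo ht).2) (hconc.subset hIoo (convex_Ioo α β)) hcent
  rw [ge_iff_le, le_div_iff₀ hint, hf]
  refine hbound.trans ?_
  have hI : IntegrableOn f (Icc a b) := by
    rw [integrableOn_Icc_iff_integrableOn_Ioc, ← intervalIntegrable_iff_integrableOn_Ioc_of_le hab]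
    by_contra h
    exact hint.ne' (intervalIntegral.integral_undef h)
  have hsub : Icc a 0 ⊆ Icc a b := Icc_subset_Icc_right hb.le
  rw [intervalIntegral.integral_of_le hc.1.le, intervalIntegral.integral_of_le ha.le,
    ← integral_Icc_eq_integral_Ioc, ← integral_Icc_eq_integral_Ioc]
  refine setIntegral_mono_set (hI.mono_set hsub) ?_ (Icc_subset_Icc haα hc0).eventuallyLE
  filter_upwards [ae_restrict_mem measurableSet_Icc] with t ht using hnn t (hsub ht)
end
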